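/- arXiv:1810.04845 — 4 statements merged into one kernel-verified Lean document; each statement's English description precedes it below -/
import Mathlib

section
/- Let T and A be compact linear operators from a reflexive real Banach space X to a real Banach space Y. Suppose M_T = D ∪ (−D) where D is a nonempty connected subset of the unit sphere of X. If T ⊥_B A, then there exists x ∈ M_T with Tx ⊥_B Ax. -/
open Filter Topology

theorem bo_weak_limit
    {X : Type*} [NormedAddCommGroup X] [NormedSpace ℝ X]
    (hrefl : Function.Surjective (NormedSpace.inclusionInDoubleDual ℝ X))
    (U : Ultrafilter ℕ) (x : ℕ → X) (hx : ∀ n, ‖x n‖ ≤ 1) :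
    ∃ z : X, ‖z‖ ≤ 1 ∧ ∀ f : StrongDual ℝ X, Tendsto (fun n => f (x n)) U (𝓝 (f z)) := by
  have hc := WeakDual.isCompact_closedBall (𝕜 := ℝ) (E := StrongDual ℝ X) 0 1
  let u : ℕ → WeakDual ℝ (StrongDual ℝ X) := fun n =>
    StrongDual.toWeakDual (NormedSpace.inclusionInDoubleDual ℝ X (x n))
  have hmem : ∀ n, u n ∈ (WeakDual.toStrongDual ⁻¹'
      Metric.closedBall (0 : StrongDual ℝ (StrongDual ℝ X)) 1) := by
    intro n
    have : ‖NormedSpace.inclusionInDoubleDual ℝ X (x n)‖ ≤ 1 :=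
      (NormedSpace.double_dual_bound ℝ X (x n)).trans (hx n)
    change dist (NormedSpace.inclusionInDoubleDual ℝ X (x n)) 0 ≤ 1
    have h0 := dist_eq_norm (NormedSpace.inclusionInDoubleDual ℝ X (x n))
      (0 : StrongDual ℝ (StrongDual ℝ X))
    rw [sub_zero] at h0
    exact h0.le.trans this
  obtain ⟨Φ, _, hΦ⟩ := hc.ultrafilter_le_nhds (U.map u)
    (by
      rw [le_principal_iff]
      exact Filter.mem_map.2 (Filter.univ_mem' hmem))
  obtain ⟨z, hz⟩ := hrefl (WeakDual.toStrongDual Φ)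
  have hlim : ∀ f : StrongDual ℝ X, Tendsto (fun n => f (x n)) U (𝓝 (f z)) := by
    intro f
    have h1 : Tendsto u U (𝓝 Φ) := hΦ
    have h2 := ((WeakDual.eval_continuous f).tendsto Φ).comp h1
    have h3 : Φ f = f z := by
      have := congrArg (fun g => g f) hz
      simpa using this.symm
    rw [← h3]
    exact h2
  refine ⟨z, ?_, hlim⟩
  refine NormedSpace.norm_le_dual_bound ℝ z zero_le_one fun f => ?_
  refine le_of_tendsto (hlim f).norm (Eventually.of_forall fun n => ?_)
  refine (f.le_opNorm _).trans ?_
  nlinarith [hx n, norm_nonneg f]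

theorem bo_compact_limit
    {X Y : Type*} [NormedAddCommGroup X] [NormedSpace ℝ X]
    [NormedAddCommGroup Y] [NormedSpace ℝ Y]
    (U : Ultrafilter ℕ) (x : ℕ → X) (hx : ∀ n, ‖x n‖ ≤ 1) (z : X)
    (hz : ∀ f : StrongDual ℝ X, Tendsto (fun n => f (x n)) U (𝓝 (f z)))
    (S : X →L[ℝ] Y) (hS : IsCompactOperator S) :
    Tendsto (fun n => S (x n)) U (𝓝 (S z)) := by
  obtain ⟨K, hK, hKs⟩ := IsCompactOperator.image_closedBall_subset_compact
    (f := (S : X →ₗ[ℝ] Y)) hS 1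
  obtain ⟨y, _, hy⟩ := hK.ultrafilter_le_nhds (U.map fun n => S (x n))
    (by
      rw [le_principal_iff]
      refine Filter.mem_map.2 (Filter.univ_mem' fun n => ?_)
      exact hKs ⟨x n, by simpa using hx n, rfl⟩)
  have hy' : Tendsto (fun n => S (x n)) U (𝓝 y) := hy
  have : y = S z := by
    refine (NormedSpace.eq_iff_forall_dual_eq ℝ).2 fun g => ?_
    exact tendsto_nhds_unique ((g.continuous.tendsto y).comp hy') (hz (g.comp S))
  rwa [← this]

theorem bo_plus
    {X Y : Type*} [NormedAddCommGroup X] [NormedSpace ℝ X]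
    [NormedAddCommGroup Y] [NormedSpace ℝ Y]
    (hrefl : Function.Surjective (NormedSpace.inclusionInDoubleDual ℝ X))
    (T A : X →L[ℝ] Y) (hT : IsCompactOperator T) (hA : IsCompactOperator A)
    (hT0 : 0 < ‖T‖) (horth : ∀ l : ℝ, ‖T + l • A‖ ≥ ‖T‖) :
    ∃ x : X, (‖x‖ = 1 ∧ ‖T x‖ = ‖T‖) ∧ ∀ l : ℝ, 0 ≤ l → ‖T x + l • A x‖ ≥ ‖T x‖ := by
  let e : ℕ → ℝ := fun n => 1 / ((n : ℝ) + 1)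
  have he : ∀ n, 0 < e n := fun n => Nat.one_div_pos_of_nat
  have hex : ∀ n, ∃ x : X, ‖x‖ ≤ 1 ∧ ‖T‖ - e n ^ 2 < ‖T x + e n • A x‖ := by
    intro n
    obtain ⟨x, hx, h⟩ := ContinuousLinearMap.exists_lt_apply_of_lt_opNorm (T + e n • A)
      (r := ‖T‖ - e n ^ 2) (by have := horth (e n); have := pow_pos (he n) 2; linarith)
    exact ⟨x, hx.le, by simpa using h⟩
  choose x hx hxe using hex
  let U : Ultrafilter ℕ := Ultrafilter.of atTop
  have hU : (U : Filter ℕ) ≤ atTop := Ultrafilter.of_le _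
  have he0 : Tendsto e U (𝓝 0) := tendsto_one_div_add_atTop_nhds_zero_nat.mono_left hU
  obtain ⟨z, hz1, hz⟩ := bo_weak_limit hrefl U x hx
  have hTz := bo_compact_limit U x hx z hz T hT
  have hAz := bo_compact_limit U x hx z hz A hA
  have hle : ∀ n, ‖T (x n)‖ ≤ ‖T‖ := fun n => by
    have := T.le_opNorm (x n)
    nlinarith [hx n]
  have key : ∀ l : ℝ, 0 ≤ l → ‖T‖ ≤ ‖T z + l • A z‖ := by
    intro l hl
    rcases hl.eq_or_lt with rfl | hl
    · have h1 : Tendsto (fun n => ‖T (x n) + e n • A (x n)‖) U (𝓝 ‖T z + (0 : ℝ) • A z‖) :=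
        (hTz.add (he0.smul hAz)).norm
      have h2 : Tendsto (fun n => ‖T‖ - e n ^ 2) U (𝓝 (‖T‖ - 0 ^ 2)) :=
        (he0.pow 2).const_sub _
      have := le_of_tendsto_of_tendsto h2 h1 (Eventually.of_forall fun n => (hxe n).le)
      simpa using this
    · have h1 : Tendsto (fun n => ‖T (x n) + l • A (x n)‖) U (𝓝 ‖T z + l • A z‖) :=
        (hTz.add (hAz.const_smul l)).norm
      have h2 : Tendsto (fun n => ‖T‖ - e n * l) U (𝓝 (‖T‖ - 0 * l)) :=
        (he0.mul_const l).const_sub _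
      have := le_of_tendsto_of_tendsto h2 h1 ?_
      · simpa using this
      filter_upwards [he0.eventually (gt_mem_nhds hl)] with n hn
      have hc : l • (T (x n) + e n • A (x n)) =
          (l - e n) • T (x n) + e n • (T (x n) + l • A (x n)) := by module
      have hc2 := congrArg norm hc
      have h3 := norm_add_le ((l - e n) • T (x n)) (e n • (T (x n) + l • A (x n)))
      rw [← hc2, norm_smul, norm_smul, norm_smul, Real.norm_of_nonneg hl.le,
        Real.norm_of_nonneg (he n).le, Real.norm_of_nonneg (by linarith)] at h3
      have h4 := mul_le_mul_of_nonneg_left (hxe n).le hl.le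
      have h5 := mul_le_mul_of_nonneg_left (hle n) (by linarith : 0 ≤ l - e n)
      refine le_of_mul_le_mul_left ?_ (he n)
      nlinarith
  have hTz1 : ‖T‖ ≤ ‖T z‖ := by simpa using key 0 le_rfl
  have hle2 := T.le_opNorm z
  have hTz2 : ‖T z‖ = ‖T‖ := le_antisymm (by nlinarith) hTz1
  refine ⟨z, ⟨le_antisymm hz1 ?_, hTz2⟩, fun l hl => hTz2 ▸ key l hl⟩
  by_contra h
  push Not at h
  nlinarith

/-- one of the two half conditions always holds -/
theorem bo_dichotomy {Y : Type*} [NormedAddCommGroup Y] [NormedSpace ℝ Y] (u v : Y) :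
    (∀ l : ℝ, 0 ≤ l → ‖u‖ ≤ ‖u + l • v‖) ∨ (∀ l : ℝ, 0 ≤ l → ‖u‖ ≤ ‖u + l • (-v)‖) := by
  by_contra! h
  obtain ⟨⟨a, ha, h1⟩, ⟨b, hb, h2⟩⟩ := h
  have ha' : 0 < a := ha.lt_of_ne (by rintro rfl; simp at h1)
  have hc : (a + b) • u = b • (u + a • v) + a • (u + b • (-v)) := by module
  have h3 := norm_add_le (b • (u + a • v)) (a • (u + b • (-v)))
  rw [← hc, norm_smul, norm_smul, norm_smul, Real.norm_of_nonneg ha,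
    Real.norm_of_nonneg hb, Real.norm_of_nonneg (by linarith)] at h3
  nlinarith

theorem bo_closed {X Y : Type*} [NormedAddCommGroup X] [NormedSpace ℝ X]
    [NormedAddCommGroup Y] [NormedSpace ℝ Y] (T A : X →L[ℝ] Y) :
    IsClosed {x : X | ∀ l : ℝ, 0 ≤ l → ‖T x‖ ≤ ‖T x + l • A x‖} := by
  simp only [Set.setOf_forall]
  refine isClosed_iInter fun l => isClosed_iInter fun _ => ?_
  exact isClosed_le (by fun_prop) (by fun_prop)

theorem birkhoff_ortho_of_symmetric_connected_norm_attainment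
    {X Y : Type*} [NormedAddCommGroup X] [NormedSpace ℝ X] [CompleteSpace X]
    [NormedAddCommGroup Y] [NormedSpace ℝ Y] [CompleteSpace Y]
    (hrefl : Function.Surjective (NormedSpace.inclusionInDoubleDual ℝ X))
    (T A : X →L[ℝ] Y) (hT : IsCompactOperator T) (hA : IsCompactOperator A)
    (D : Set X) (hD : D.Nonempty) (hDconn : IsConnected D)
    (hDsub : D ⊆ {x : X | ‖x‖ = 1})
    (hMT : {x : X | ‖x‖ = 1 ∧ ‖T x‖ = ‖T‖} = D ∪ (-D))
    (horth : ∀ l : ℝ, ‖T + l • A‖ ≥ ‖T‖) :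
    ∃ x ∈ {x : X | ‖x‖ = 1 ∧ ‖T x‖ = ‖T‖}, ∀ l : ℝ, ‖T x + l • A x‖ ≥ ‖T x‖ := by
  rcases (norm_nonneg T).eq_or_lt with h0 | h0
  · obtain ⟨d, hd⟩ := hD
    have hdM : d ∈ {x : X | ‖x‖ = 1 ∧ ‖T x‖ = ‖T‖} := hMT ▸ Or.inl hd
    refine ⟨d, hdM, fun l => ?_⟩
    rw [hdM.2, ← h0]
    exact norm_nonneg _
  have main : ∀ B : X →L[ℝ] Y, IsCompactOperator B → (∀ l : ℝ, ‖T + l • B‖ ≥ ‖T‖) →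
      (D ∩ {x : X | ∀ l : ℝ, 0 ≤ l → ‖T x‖ ≤ ‖T x + l • B x‖}).Nonempty := by
    intro B hB hBo
    obtain ⟨x, hxM, hx⟩ := bo_plus hrefl T B hT hB h0 hBo
    have hxD : x ∈ D ∪ (-D) := hMT ▸ hxM
    rcases hxD with h | h
    · exact ⟨x, h, hx⟩
    · refine ⟨-x, h, fun l hl => ?_⟩
      have h1 : T (-x) + l • B (-x) = -(T x + l • B x) := by
        simp only [map_neg]; module
      rw [h1, norm_neg, map_neg, norm_neg]
      exact hx l hl
  have h1 := main A hA horth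
  have h2 := main (-A) hA.neg fun l => by
    have := horth (-l)
    rwa [neg_smul, ← smul_neg] at this
  obtain ⟨x, hxD, hp, hm⟩ := isPreconnected_closed_iff.1 hDconn.isPreconnected _ _
    (bo_closed T A) (bo_closed T (-A)) (fun x _ => bo_dichotomy (T x) (A x)) h1 h2
  refine ⟨x, hMT ▸ Or.inl hxD, fun l => ?_⟩
  rcases le_total 0 l with hl | hl
  · exact hp l hl
  · have := hm (-l) (by linarith)
    simpa using this
end

section
/- Let H be an infinite-dimensional real Hilbert space and T, A : H → H compact linear operators. Then T is Birkhoff-James orthogonal to A (‖T + λA‖ ≥ ‖T‖ for all real λ) if and only if there exists a unit vector x with ‖Tx‖ = ‖T‖ and ⟨Tx, Ax⟩ = 0. -/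
open RealInnerProductSpace

section helpers
open Filter Topology

variable {H : Type*} [NormedAddCommGroup H] [InnerProductSpace ℝ H] [CompleteSpace H]

lemma bj_bound (T : H →L[ℝ] H) (x : H) (hx : ‖x‖ ≤ 1) :
    ‖T.adjoint (T x) - (‖T‖ ^ 2) • x‖ ^ 2 ≤ ‖T‖ ^ 2 * (‖T‖ ^ 2 - ‖T x‖ ^ 2) := by
  have h1 : ‖T.adjoint (T x)‖ ≤ ‖T‖ * ‖T x‖ := by
    have := T.adjoint.le_opNorm (T x)
    rwa [LinearIsometryEquiv.norm_map] at this
  have h2 : ⟪T.adjoint (T x), x⟫ = ‖T x‖ ^ 2 := by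
    rw [ContinuousLinearMap.adjoint_inner_left, real_inner_self_eq_norm_sq]
  rw [norm_sub_sq_real, real_inner_smul_right, h2, norm_smul, Real.norm_of_nonneg (by positivity)]
  have h3 : ‖T.adjoint (T x)‖ ^ 2 ≤ (‖T‖ * ‖T x‖) ^ 2 := by gcongr
  have h4 : (‖T‖ ^ 2 * ‖x‖) ^ 2 ≤ (‖T‖ ^ 2 * 1) ^ 2 := by gcongr
  nlinarith

lemma bj_exists (T A : H →L[ℝ] H) (hT : IsCompactOperator T) (h0 : T ≠ 0)
    (h : ∀ l : ℝ, ‖T + l • A‖ ≥ ‖T‖) :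
    ∃ x : H, ‖x‖ = 1 ∧ ‖T x‖ = ‖T‖ ∧ 0 ≤ ⟪T x, A x⟫ := by
  have ht : 0 < ‖T‖ := norm_pos_iff.2 h0
  let l : ℕ → ℝ := fun n => 1 / ((n : ℝ) + 1)
  have hl : ∀ n, 0 < l n := fun n => by positivity
  have hl0 : Tendsto l atTop (𝓝 0) := tendsto_one_div_add_atTop_nhds_zero_nat
  have hex : ∀ n, ∃ x : H, ‖x‖ < 1 ∧ ‖T‖ - l n ^ 2 < ‖(T + l n • A) x‖ := fun n =>
    ContinuousLinearMap.exists_lt_apply_of_lt_opNorm _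
      (by have := h (l n); have := pow_pos (hl n) 2; linarith)
  choose x hx1 hx2 using hex
  have hTx : ∀ n, ‖T (x n)‖ ≤ ‖T‖ := fun n => T.unit_le_opNorm _ (hx1 n).le
  have hAx : ∀ n, ‖A (x n)‖ ≤ ‖A‖ := fun n => A.unit_le_opNorm _ (hx1 n).le
  have hlow : ∀ n, ‖T‖ - l n ^ 2 - l n * ‖A‖ ≤ ‖T (x n)‖ := by
    intro n
    have h1 := norm_add_le (T (x n)) (l n • A (x n))
    rw [norm_smul, Real.norm_of_nonneg (hl n).le] at h1
    have h2 := hx2 n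
    simp only [ContinuousLinearMap.add_apply, ContinuousLinearMap.smul_apply] at h2
    have := mul_le_mul_of_nonneg_left (hAx n) (hl n).le
    linarith
  have hTlim : Tendsto (fun n => ‖T (x n)‖) atTop (𝓝 ‖T‖) := by
    refine tendsto_of_tendsto_of_tendsto_of_le_of_le ?_ tendsto_const_nhds hlow hTx
    have := (tendsto_const_nhds (x := ‖T‖)).sub (hl0.pow 2) |>.sub (hl0.mul_const ‖A‖)
    simpa using this
  have hin : ∀ n, -(l n * (‖A‖ ^ 2 + 2 * ‖T‖)) ≤ 2 * ⟪T (x n), A (x n)⟫ := by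
    intro n
    have h2 := hx2 n
    simp only [ContinuousLinearMap.add_apply, ContinuousLinearMap.smul_apply] at h2
    have h3 := norm_add_sq_real (T (x n)) (l n • A (x n))
    rw [real_inner_smul_right, norm_smul, Real.norm_of_nonneg (hl n).le] at h3
    have h4 : ‖T (x n)‖ ^ 2 ≤ ‖T‖ ^ 2 := by gcongr; exact hTx n
    have h5 : (l n * ‖A (x n)‖) ^ 2 ≤ (l n * ‖A‖) ^ 2 := by
      have := hl n
      gcongr; exact hAx n
    have h6 : ‖T‖ ^ 2 - 2 * l n ^ 2 * ‖T‖ ≤ ‖T (x n) + l n • A (x n)‖ ^ 2 := by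
      nlinarith [norm_nonneg (T (x n) + l n • A (x n)), sq_nonneg (‖T (x n) + l n • A (x n)‖ - ‖T‖), pow_pos (hl n) 2]
    have h7 : l n * (-(l n * (‖A‖ ^ 2 + 2 * ‖T‖))) ≤ l n * (2 * ⟪T (x n), A (x n)⟫) := by
      nlinarith
    exact le_of_mul_le_mul_left h7 (hl n)
  obtain ⟨K, hK, hKs⟩ := IsCompactOperator.image_closedBall_subset_compact (f := T.toLinearMap) hT 1
  obtain ⟨y, -, φ, hφ, hy⟩ := hK.tendsto_subseq (x := fun n => T (x n))
    (fun n => hKs ⟨x n, by simpa using (hx1 n).le, rfl⟩)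
  have hd : Tendsto (fun n => T.adjoint (T (x n)) - (‖T‖ ^ 2) • x n) atTop (𝓝 0) := by
    rw [tendsto_zero_iff_norm_tendsto_zero]
    have h1 : Tendsto (fun n => ‖T.adjoint (T (x n)) - (‖T‖ ^ 2) • x n‖ ^ 2) atTop (𝓝 0) := by
      refine squeeze_zero (fun _ => by positivity) (fun n => bj_bound T (x n) (hx1 n).le) ?_
      have := ((tendsto_const_nhds (x := ‖T‖ ^ 2)).sub (hTlim.pow 2)).const_mul (‖T‖ ^ 2)
      simpa using this
    have := h1.sqrt
    simpa using this
  have hlim : Tendsto (fun n => x (φ n)) atTop (𝓝 ((‖T‖ ^ 2)⁻¹ • (T.adjoint y - 0))) := by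
    have h1 := (((T.adjoint.continuous.tendsto y).comp hy).sub
      (hd.comp hφ.tendsto_atTop)).const_smul ((‖T‖ ^ 2)⁻¹)
    refine h1.congr fun n => ?_
    simp only [Function.comp]
    rw [sub_sub_cancel, smul_smul, inv_mul_cancel₀ (by positivity), one_smul]
  set z := (‖T‖ ^ 2)⁻¹ • (T.adjoint y - 0)
  have hz1 : ‖z‖ ≤ 1 := le_of_tendsto hlim.norm (Eventually.of_forall fun n => (hx1 _).le)
  have hTz : Tendsto (fun n => T (x (φ n))) atTop (𝓝 (T z)) := (T.continuous.tendsto z).comp hlim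
  have hAz : Tendsto (fun n => A (x (φ n))) atTop (𝓝 (A z)) := (A.continuous.tendsto z).comp hlim
  have hz2 : ‖T z‖ = ‖T‖ := tendsto_nhds_unique hTz.norm (hTlim.comp hφ.tendsto_atTop)
  refine ⟨z, le_antisymm hz1 ?_, hz2, ?_⟩
  · have := T.le_opNorm z
    rw [hz2] at this
    nlinarith
  · have h1 := ((hl0.comp hφ.tendsto_atTop).mul_const (‖A‖ ^ 2 + 2 * ‖T‖)).neg
    have h2 := (hTz.inner (𝕜 := ℝ) hAz).const_mul 2
    have := le_of_tendsto_of_tendsto h1 h2 (Eventually.of_forall fun n => hin (φ n))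
    simp only [zero_mul, neg_zero] at this
    linarith

lemma bj_eig (T : H →L[ℝ] H) (x : H) (hx : ‖x‖ = 1) (h : ‖T x‖ = ‖T‖) :
    T.adjoint (T x) = (‖T‖ ^ 2) • x := by
  have := bj_bound T x hx.le
  rw [h, sub_self, mul_zero] at this
  rw [← sub_eq_zero, ← norm_eq_zero]
  exact pow_eq_zero_iff two_ne_zero |>.1 (le_antisymm this (by positivity))

end helpers

theorem compact_birkhoff_iff_inner_ortho
    {H : Type*} [NormedAddCommGroup H] [InnerProductSpace ℝ H] [CompleteSpace H]
    (hinf : ¬ FiniteDimensional ℝ H)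
    (T A : H →L[ℝ] H) (hT : IsCompactOperator T) (hA : IsCompactOperator A) :
    (∀ l : ℝ, ‖T + l • A‖ ≥ ‖T‖) ↔
      ∃ x : H, ‖x‖ = 1 ∧ ‖T x‖ = ‖T‖ ∧ ⟪T x, A x⟫ = 0 := by
  constructor
  · intro h
    by_cases h0 : T = 0
    · have : Nontrivial H := by
        by_contra hn
        rw [not_nontrivial_iff_subsingleton] at hn
        exact hinf inferInstance
      obtain ⟨x, hx⟩ := exists_norm_eq H (zero_le_one (α := ℝ))
      exact ⟨x, hx, by simp [h0], by simp [h0]⟩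
    obtain ⟨x, hx, hTx, hxA⟩ := bj_exists T A hT h0 h
    obtain ⟨y, hy, hTy, hyA⟩ := bj_exists T (-A) hT h0 (fun l => by
      have := h (-l)
      rwa [neg_smul, ← smul_neg] at this)
    simp only [ContinuousLinearMap.neg_apply, inner_neg_right] at hyA
    let p : ℝ → H := fun s => (1 - s) • x + s • y
    have hp : Continuous p := by fun_prop
    have hc : Continuous fun s => ⟪T (p s), A (p s)⟫ := by fun_prop
    obtain ⟨s, -, hs⟩ := intermediate_value_Icc' (zero_le_one (α := ℝ)) hc.continuousOn
      (show (0 : ℝ) ∈ Set.Icc _ _ from ⟨by simp [p]; linarith, by simpa [p] using hxA⟩)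
    simp only at hs
    by_cases hz : p s = 0
    · have h1 : (1 - s) • x = -(s • y) := eq_neg_of_add_eq_zero_left hz
      have h2 := congrArg norm h1
      rw [norm_neg, norm_smul, norm_smul, hx, hy, mul_one, mul_one, Real.norm_eq_abs,
        Real.norm_eq_abs, abs_eq_abs] at h2
      have hs2 : s = 1 / 2 := by rcases h2 with h2 | h2 <;> linarith
      have hxy : x = -y := by
        subst hs2
        have h3 : (1 / 2 : ℝ) • x = (1 / 2 : ℝ) • (-y) := by
          rw [smul_neg, ← h1]; norm_num
        exact smul_right_injective H (by norm_num : (1 / 2 : ℝ) ≠ 0) h3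
      refine ⟨x, hx, hTx, le_antisymm ?_ hxA⟩
      rw [hxy]
      simp only [map_neg, inner_neg_neg]
      linarith
    · have hzn : 0 < ‖p s‖ := norm_pos_iff.2 hz
      have he : T.adjoint (T (p s)) = (‖T‖ ^ 2) • p s := by
        simp only [p, map_add, map_smul, bj_eig T x hx hTx, bj_eig T y hy hTy, smul_add]
        rw [smul_comm, smul_comm s]
      have hn : ‖T (p s)‖ = ‖T‖ * ‖p s‖ := by
        have h1 : ⟪T.adjoint (T (p s)), p s⟫ = ‖T (p s)‖ ^ 2 := by
          rw [ContinuousLinearMap.adjoint_inner_left, real_inner_self_eq_norm_sq]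
        rw [he, real_inner_smul_left, real_inner_self_eq_norm_sq, ← mul_pow] at h1
        exact (pow_left_inj₀ (by positivity) (by positivity) two_ne_zero).1 h1.symm
      refine ⟨‖p s‖⁻¹ • p s, ?_, ?_, ?_⟩
      · rw [norm_smul, norm_inv, norm_norm, inv_mul_cancel₀ hzn.ne']
      · rw [map_smul, norm_smul, norm_inv, norm_norm, hn]
        field_simp
      · rw [map_smul, map_smul, real_inner_smul_left, real_inner_smul_right, hs]
        simp
  · rintro ⟨x, hx, hTx, hxA⟩ l
    have h1 := (T + l • A).unit_le_opNorm x hx.le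
    refine le_trans ?_ h1
    rw [← hTx]
    refine le_of_sq_le_sq ?_ (norm_nonneg _)
    simp only [ContinuousLinearMap.add_apply, ContinuousLinearMap.smul_apply]
    rw [norm_add_sq_real, real_inner_smul_right, hxA]
    have := sq_nonneg ‖l • A x‖
    linarith
end

section
/- Let X be a finite-dimensional real Banach space such that for every bounded linear operator T on X, the norm attainment set M_T can be written as D_T ∪ (−D_T) for some connected subset D_T of the unit sphere. Then X is a Euclidean space (the norm is induced by an inner product). -/
open Complex in
theorem topo_aux (w : ℂ → ℝ → ℝ) (hw : Continuous (fun q : ℂ × ℝ => w q.1 q.2))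
    (h0 : ∀ p s, 0 ≤ w p s) (per : ∀ p s, w p (s + Real.pi) = w p s)
    (hz : ∀ p, ∃ s, w p s = 0)
    (ord : ∀ p s0 a m b, s0 < a → a ≤ m → m ≤ b → b < s0 + Real.pi → w p s0 ≠ 0 →
      w p a = 0 → w p b = 0 → w p m = 0)
    (bd : ∀ φ : ℝ, w (exp (φ * I)) (φ / 2 + Real.pi / 2) ≠ 0) :
    ∃ p, ∀ s, w p s = 0 := by
  by_contra hcon
  push Not at hcon
  have hpi := Real.pi_pos
  let g : ℂ → ℝ → ℂ := fun p s => (w p s : ℂ) * exp (s * I)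
  have hg : Continuous (fun q : ℂ × ℝ => g q.1 q.2) := by
    dsimp only [g]; fun_prop
  have gper : ∀ p s, g p (s + Real.pi) = - g p s := by
    intro p s
    simp only [g, per]
    push_cast
    rw [add_mul, exp_add, exp_pi_mul_I]; ring
  let F : ℂ → ℝ → ℂ := fun p θ => ∫ u in (0:ℝ)..Real.pi, g p (θ + u)
  have hF : Continuous (fun q : ℂ × ℝ => F q.1 q.2) := by
    apply intervalIntegral.continuous_parametric_intervalIntegral_of_continuous'
    exact hg.comp (f := fun x : (ℂ × ℝ) × ℝ => (x.1.1, x.1.2 + x.2)) (by fun_prop)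
  have Fanti : ∀ p θ, F p (θ + Real.pi) = - F p θ := by
    intro p θ
    simp only [F]
    rw [← intervalIntegral.integral_neg]
    congr 1; ext u
    rw [← gper]; congr 1; ring
  have gc : ∀ p, Continuous (g p) := fun p => hg.comp (f := fun x : ℝ => (p, x)) (by fun_prop)
  have gi : ∀ p a b, IntervalIntegrable (g p) MeasureTheory.volume a b :=
    fun p a b => (gc p).intervalIntegrable a b
  have Fconst : ∀ p a b, a ≤ b → (∀ m, a ≤ m → m ≤ b → w p m = 0) → F p a = F p b := by
    intro p a b hab hm
    have e1 : ∀ θ, F p θ = ∫ s in θ..θ + Real.pi, g p s := by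
      intro θ
      simp only [F]
      rw [intervalIntegral.integral_comp_add_left (g p) θ]; simp
    have i1 : ∫ s in a..b, g p s = 0 := by
      rw [intervalIntegral.integral_congr (g := fun _ => 0)]
      · simp
      · intro s hs
        rw [Set.uIcc_of_le hab] at hs
        simp [g, hm s hs.1 hs.2]
    have i2 : ∫ s in a + Real.pi..b + Real.pi, g p s = 0 := by
      rw [intervalIntegral.integral_congr (g := fun _ => 0)]
      · simp
      · intro s hs
        rw [Set.uIcc_of_le (by linarith)] at hs
        have := hm (s - Real.pi) (by linarith [hs.1]) (by linarith [hs.2])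
        rw [← per] at this
        simp only [sub_add_cancel] at this
        simp [g, this]
    have j1 := intervalIntegral.integral_add_adjacent_intervals (gi p a (a + Real.pi))
      (gi p (a + Real.pi) (b + Real.pi))
    have j2 := intervalIntegral.integral_add_adjacent_intervals (gi p a b)
      (gi p b (b + Real.pi))
    rw [e1, e1]
    rw [i2] at j1; rw [i1] at j2
    simp at j1 j2
    rw [j1, j2]
  have wper : ∀ p (k : ℤ) s, w p (s + k * Real.pi) = w p s := by
    intro p k s
    have := Function.Periodic.int_mul (f := w p) (c := Real.pi) (per p) k s
    exact this
  have Fsq : ∀ p (k : ℤ) s, F p (s + k * Real.pi) ^ 2 = F p s ^ 2 := by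
    intro p k s
    have : Function.Periodic (fun s => F p s ^ 2) Real.pi := by
      intro s; simp [Fanti]
    exact this.int_mul k s
  have rep : ∀ s0 s : ℝ, ∃ k : ℤ, s0 ≤ s + k * Real.pi ∧ s + k * Real.pi < s0 + Real.pi := by
    intro s0 s
    obtain ⟨k, hk, -⟩ := existsUnique_add_zsmul_mem_Ico hpi s s0
    refine ⟨k, ?_, ?_⟩
    · simpa using hk.1
    · simpa using hk.2
  have Fne : ∀ p θ, w p θ = 0 → F p θ ≠ 0 := by
    intro p θ hθ hF0
    obtain ⟨s0, hs0⟩ := hcon p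
    obtain ⟨k, hk1, hk2⟩ := rep θ s0
    set c := s0 + k * Real.pi - θ with hc
    have hwc : w p (θ + c) ≠ 0 := by
      rw [hc, add_sub_cancel, wper]; exact hs0
    have hc0 : 0 < c := by
      rcases (show 0 ≤ c by linarith).eq_or_lt with h | h
      · rw [← h] at hwc; simp [hθ] at hwc
      · exact h
    have wc : Continuous (w p) := hw.comp (f := fun x : ℝ => (p, x)) (by fun_prop)
    have hpos : 0 < ∫ u in (0:ℝ)..Real.pi, w p (θ + u) * Real.sin u := by
      apply intervalIntegral.integral_pos hpi
      · fun_prop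
      · intro x hx
        exact mul_nonneg (h0 _ _) (Real.sin_nonneg_of_nonneg_of_le_pi hx.1.le hx.2)
      · refine ⟨c, ⟨hc0.le, by linarith⟩, ?_⟩
        exact mul_pos (lt_of_le_of_ne (h0 _ _) hwc.symm)
          (Real.sin_pos_of_pos_of_lt_pi hc0 (by linarith))
    have : (exp (-(θ * I)) * F p θ).im = ∫ u in (0:ℝ)..Real.pi, w p (θ + u) * Real.sin u := by
      simp only [F]
      rw [← intervalIntegral.integral_const_mul]
      have hii : IntervalIntegrable (fun u : ℝ => exp (-(θ * I)) * g p (θ + u))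
          MeasureTheory.volume 0 Real.pi := by
        apply Continuous.intervalIntegrable
        have := gc p
        fun_prop
      have := imCLM.intervalIntegral_comp_comm hii
      simp only [imCLM_apply] at this
      rw [← this]
      congr 1; ext u
      simp only [g]
      rw [show exp (-(θ * I)) * ((w p (θ + u) : ℂ) * exp (((θ + u : ℝ) : ℂ) * I))
        = (w p (θ + u) : ℂ) * exp (u * I) by
          push_cast
          rw [add_mul, exp_add, exp_neg]
          field_simp [exp_ne_zero]]
      rw [im_ofReal_mul, exp_ofReal_mul_I_im]
    rw [hF0] at this
    simp at this
    linarith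
  have Fiv : ∀ p s0 a b, w p s0 ≠ 0 → s0 ≤ a → a < s0 + Real.pi → s0 ≤ b → b < s0 + Real.pi →
      w p a = 0 → w p b = 0 → F p a = F p b := by
    have key : ∀ p s0 a b, a ≤ b → w p s0 ≠ 0 → s0 ≤ a → b < s0 + Real.pi →
      w p a = 0 → w p b = 0 → F p a = F p b := by
      intro p s0 a b hab hs0 h1 h2 ha hb
      apply Fconst p a b hab
      intro m hm1 hm2
      refine ord p s0 a m b ?_ hm1 hm2 h2 hs0 ha hb
      rcases h1.eq_or_lt with h | h
      · subst h; exact absurd ha hs0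
      · exact h
    intro p s0 a b hs0 h1 h2 h3 h4 ha hb
    rcases le_total a b with h | h
    · exact key p s0 a b h hs0 h1 h4 ha hb
    · exact (key p s0 b a h hs0 h3 h2 hb ha).symm
  have Fsqc : ∀ p a b, w p a = 0 → w p b = 0 → F p a ^ 2 = F p b ^ 2 := by
    intro p a b ha hb
    obtain ⟨s0, hs0⟩ := hcon p
    obtain ⟨k, hk1, hk2⟩ := rep s0 a
    obtain ⟨l, hl1, hl2⟩ := rep s0 b
    rw [← Fsq p k a, ← Fsq p l b, Fiv p s0 _ _ hs0 hk1 hk2 hl1 hl2 (by rwa [wper]) (by rwa [wper])]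
  choose θ hθ using hz
  have hcont : Continuous (fun p => F p (θ p) ^ 2) := by
    rw [continuous_iff_isClosed]
    intro C hC
    have hcl : IsClosed {q : ℂ × Set.Icc (0:ℝ) Real.pi | w q.1 q.2 = 0 ∧ F q.1 q.2 ^ 2 ∈ C} := by
      have hin : Continuous (fun q : ℂ × Set.Icc (0:ℝ) Real.pi => (q.1, (q.2 : ℝ))) := by fun_prop
      apply IsClosed.inter
      · exact isClosed_singleton.preimage (hw.comp hin)
      · exact hC.preimage ((hF.comp hin).pow 2)
    have := isClosedMap_fst_of_compactSpace _ hcl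
    convert this using 1
    ext p
    constructor
    · intro hp
      obtain ⟨k, hk1, hk2⟩ := rep 0 (θ p)
      have hwz : w p (θ p + k * Real.pi) = 0 := by rw [wper, hθ]
      refine ⟨(p, ⟨θ p + k * Real.pi, hk1, by linarith⟩), ⟨hwz, ?_⟩, rfl⟩
      rw [Set.mem_preimage] at hp
      simpa [Fsq] using hp
    · rintro ⟨⟨p', t⟩, ⟨h1, h2⟩, rfl⟩
      rw [Set.mem_preimage, Fsqc _ _ t (hθ _) h1]
      exact h2
  obtain ⟨k, hkc, hk⟩ := exists_continuousOn_pow_eq (X := ℂ) (U := Set.univ)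
    (by
      have : ContractibleSpace (Set.univ : Set ℂ) :=
        convex_univ.contractibleSpace Set.univ_nonempty
      exact (inferInstance : SimplyConnectedSpace (Set.univ : Set ℂ))) isOpen_univ hcont.continuousOn
      (by rintro ⟨p, -, hp⟩; exact Fne p _ (hθ p) (by simpa using hp)) (n := 2) two_ne_zero
  rw [continuousOn_univ] at hkc
  let S : ℂ → Set ℝ := fun ε => {φ : ℝ | ∃ t ∈ Set.Icc (-(Real.pi/2)) (Real.pi/2),
    w (exp (φ * I)) (φ/2 + t) = 0 ∧ k (exp (φ * I)) = ε * F (exp (φ * I)) (φ/2 + t)}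
  have Scl : ∀ ε, IsClosed (S ε) := by
    intro ε
    have hcl : IsClosed {q : ℝ × Set.Icc (-(Real.pi/2)) (Real.pi/2) |
        w (exp (q.1 * I)) (q.1/2 + q.2) = 0 ∧
        k (exp (q.1 * I)) = ε * F (exp (q.1 * I)) (q.1/2 + q.2)} := by
      have hin : Continuous (fun q : ℝ × Set.Icc (-(Real.pi/2)) (Real.pi/2) =>
        (exp (q.1 * I), q.1/2 + (q.2 : ℝ))) := by fun_prop
      apply IsClosed.inter
      · exact isClosed_singleton.preimage (hw.comp hin)
      · apply isClosed_eq
        · fun_prop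
        · exact continuous_const.mul (hF.comp hin)
    have := isClosedMap_fst_of_compactSpace _ hcl
    convert this using 1
    ext φ
    constructor
    · rintro ⟨t, ht, h1, h2⟩
      exact ⟨(φ, ⟨t, ht⟩), ⟨h1, h2⟩, rfl⟩
    · rintro ⟨⟨φ', t⟩, ⟨h1, h2⟩, rfl⟩
      exact ⟨t, t.2, h1, h2⟩
  have bd' : ∀ φ : ℝ, w (exp (φ * I)) (φ / 2 - Real.pi / 2) ≠ 0 := by
    intro φ
    rw [← per, show φ / 2 - Real.pi / 2 + Real.pi = φ / 2 + Real.pi / 2 by ring]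
    exact bd φ
  have cover : (Set.univ : Set ℝ) ⊆ S 1 ∪ S (-1) := by
    intro φ _
    obtain ⟨l, hl1, hl2⟩ := rep (φ/2 - Real.pi/2) (θ (exp (φ * I)))
    have hwz : w (exp (φ * I)) (θ (exp (φ * I)) + l * Real.pi) = 0 := by rw [wper, hθ]
    have hsq := hk (exp (φ * I))
    rw [← Fsq _ l, sq_eq_sq_iff_eq_or_eq_neg] at hsq
    rcases hsq with hsq | hsq
    · left
      refine ⟨θ (exp (φ * I)) + l * Real.pi - φ/2, ⟨by linarith, by linarith⟩, ?_, ?_⟩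
      · rw [add_sub_cancel]; exact hwz
      · rw [add_sub_cancel, one_mul]; exact hsq
    · right
      refine ⟨θ (exp (φ * I)) + l * Real.pi - φ/2, ⟨by linarith, by linarith⟩, ?_, ?_⟩
      · rw [add_sub_cancel]; exact hwz
      · rw [add_sub_cancel, neg_one_mul]; exact hsq
  have shift : ∀ ε φ, φ ∈ S ε → φ + 2 * Real.pi ∈ S (-ε) := by
    rintro ε φ ⟨t, ht, h1, h2⟩
    have he : exp (((φ + 2 * Real.pi : ℝ) : ℂ) * I) = exp (φ * I) := by
      push_cast
      rw [add_mul, exp_add, exp_two_pi_mul_I, mul_one]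
    have ha : (φ + 2 * Real.pi) / 2 + t = φ / 2 + t + Real.pi := by ring
    refine ⟨t, ht, ?_, ?_⟩
    · rw [he, ha, per]; exact h1
    · rw [he, ha, Fanti, h2]; ring
  have hne : (S 1).Nonempty ∧ (S (-1)).Nonempty := by
    rcases cover (Set.mem_univ (0:ℝ)) with h | h
    · exact ⟨⟨_, h⟩, ⟨_, shift _ _ h⟩⟩
    · refine ⟨⟨0 + 2 * Real.pi, ?_⟩, ⟨_, h⟩⟩
      have := shift _ _ h
      rwa [neg_neg] at this
  obtain ⟨φ, -, ⟨t, ht, h1, h2⟩, ⟨t', ht', h1', h2'⟩⟩ :=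
    isPreconnected_closed_iff.mp (isPreconnected_univ (α := ℝ)) _ _ (Scl 1) (Scl (-1)) cover
      (by simpa using hne.1) (by simpa using hne.2)
  have lt_of : ∀ t ∈ Set.Icc (-(Real.pi/2)) (Real.pi/2), w (exp (φ * I)) (φ/2 + t) = 0 →
      φ / 2 + t < φ / 2 - Real.pi / 2 + Real.pi := by
    intro t ht h1
    rcases ht.2.eq_or_lt with h | h
    · rw [h] at h1; exact absurd h1 (bd φ)
    · linarith
  have := Fiv _ _ _ _ (bd' φ) (by linarith [ht.1]) (lt_of t ht h1) (by linarith [ht'.1])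
    (lt_of t' ht' h1') h1 h1'
  rw [h2, this] at h2'
  apply Fne _ _ h1'
  linear_combination h2' / 2

/-- Norm-like functions on the plane. -/
structure NormLike (n : ℂ → ℝ) : Prop where
  cont : Continuous n
  hom : ∀ (c : ℝ) (z : ℂ), n (c * z) = |c| * n z
  pos : ∀ z : ℂ, z ≠ 0 → 0 < n z

theorem NormLike.zero {n : ℂ → ℝ} (hn : NormLike n) : n 0 = 0 := by
  simpa using hn.hom 0 0

open Complex in
theorem ord_aux {X : Type*} [NormedAddCommGroup X] [NormedSpace ℝ X] [FiniteDimensional ℝ X]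
    (h : ∀ T : X →L[ℝ] X, ∃ D : Set X, IsConnected D ∧ D ⊆ {x : X | ‖x‖ = 1} ∧
      {x : X | ‖x‖ = 1 ∧ ‖T x‖ = ‖T‖} = D ∪ (-D))
    (n : ℂ → ℝ) (hn : NormLike n) (A : X →ₗ[ℝ] ℂ) (hA : ∀ x, n (A x) ≤ ‖x‖)
    (hA' : ∀ z, ∃ x, A x = z ∧ ‖x‖ = n z) (L : ℂ →ₗ[ℝ] X) (N : ℝ) (hN : 0 < N)
    (le : ∀ s : ℝ, ‖L (exp (s * I))‖ ≤ N * n (exp (s * I)))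
    (s0 a m b : ℝ) (h1 : s0 < a) (h2 : a ≤ m) (h3 : m ≤ b) (h4 : b < s0 + Real.pi)
    (hs0 : ‖L (exp (s0 * I))‖ ≠ N * n (exp (s0 * I)))
    (ha : ‖L (exp (a * I))‖ = N * n (exp (a * I)))
    (hb : ‖L (exp (b * I))‖ = N * n (exp (b * I))) :
    ‖L (exp (m * I))‖ = N * n (exp (m * I)) := by
  by_contra hm
  have ham : a < m := lt_of_le_of_ne h2 (by rintro rfl; exact hm ha)
  have hmb : m < b := lt_of_le_of_ne h3 (by rintro rfl; exact hm hb)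
  have Lhom : ∀ (c : ℝ) z, ‖L (c * z)‖ = |c| * ‖L z‖ := by
    intro c z
    rw [← real_smul, map_smul, norm_smul, Real.norm_eq_abs]
  have le' : ∀ z, ‖L z‖ ≤ N * n z := by
    intro z
    rw [← norm_mul_exp_arg_mul_I z, Lhom, hn.hom]
    nlinarith [le (arg z), abs_nonneg ‖z‖]
  let T : X →L[ℝ] X := LinearMap.toContinuousLinearMap (L ∘ₗ A)
  have hT : ∀ x, T x = L (A x) := fun x => rfl
  have hpt : ∀ s : ℝ, ‖L (exp (s * I))‖ = N * n (exp (s * I)) →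
      ∃ x, A x = ((n (exp (s * I)))⁻¹ : ℝ) * exp (s * I) ∧ ‖x‖ = 1 ∧ ‖T x‖ = N := by
    intro s hs
    have hp := hn.pos _ (exp_ne_zero (s * I))
    obtain ⟨x, hx, hx'⟩ := hA' (((n (exp (s * I)))⁻¹ : ℝ) * exp (s * I))
    refine ⟨x, hx, ?_, ?_⟩
    · rw [hx', hn.hom, abs_of_pos (by positivity)]; field_simp
    · rw [hT, hx, Lhom, hs, abs_of_pos (by positivity)]; field_simp
  have hTN : ‖T‖ = N := by
    apply le_antisymm
    · apply T.opNorm_le_bound hN.le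
      intro x
      rw [hT]
      exact (le' _).trans (mul_le_mul_of_nonneg_left (hA x) hN.le)
    · obtain ⟨x, -, hx1, hx2⟩ := hpt a ha
      have := T.le_opNorm x
      rw [hx1, hx2, mul_one] at this
      exact this
  obtain ⟨D, hDc, -, hD⟩ := h T
  let f : ℝ → X → ℝ := fun t x => (exp (-(t * I)) * A x).im
  have hAc : Continuous A := A.continuous_of_finiteDimensional
  have fne : ∀ t : ℝ, ‖L (exp (t * I))‖ ≠ N * n (exp (t * I)) → ∀ x, ‖x‖ = 1 → ‖T x‖ = ‖T‖ →
      f t x ≠ 0 := by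
    intro t ht x hx hx' hf
    have hr : A x = ((exp (-(t * I)) * A x).re : ℝ) * exp (t * I) := by
      have : exp (-(t * I)) * A x = ((exp (-(t * I)) * A x).re : ℝ) := by
        apply Complex.ext
        · simp
        · rw [ofReal_im]; exact hf
      rw [← this, exp_neg]
      field_simp [exp_ne_zero]
    set c := (exp (-(t * I)) * A x).re
    have e1 := hA x
    rw [hT, hTN, hr, Lhom] at hx'
    rw [hr, hn.hom, hx] at e1
    have e2 := lt_of_le_of_ne (le t) ht
    have hc : 0 < |c| := by
      rcases (abs_nonneg c).eq_or_lt with h | h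
      · rw [← h] at hx'; simp at hx'; linarith
      · exact h
    nlinarith
  have fval : ∀ t s : ℝ, ∀ x, A x = ((n (exp (s * I)))⁻¹ : ℝ) * exp (s * I) →
      f t x = (n (exp (s * I)))⁻¹ * Real.sin (s - t) := by
    intro t s x hx
    simp only [f]
    rw [hx, show exp (-(t * I)) * (((n (exp (s * I)))⁻¹ : ℝ) * exp (s * I)) =
      ((n (exp (s * I)))⁻¹ : ℝ) * exp ((s - t : ℝ) * I) by
        push_cast; rw [sub_mul, sub_eq_add_neg, exp_add]; ring]
    rw [im_ofReal_mul, exp_ofReal_mul_I_im]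
  let κ : X → ℝ := fun x => f s0 x * f m x
  have κc : Continuous κ := by
    have : ∀ t, Continuous (f t) := fun t => by dsimp only [f]; fun_prop
    exact (this s0).mul (this m)
  have κneg : ∀ x, κ (-x) = κ x := by intro x; simp [κ, f]; ring
  have κD : ∀ x ∈ D, κ x ≠ 0 := by
    intro x hx
    have : x ∈ {x : X | ‖x‖ = 1 ∧ ‖T x‖ = ‖T‖} := by rw [hD]; exact Or.inl hx
    exact mul_ne_zero (fne s0 hs0 x this.1 this.2) (fne m hm x this.1 this.2)
  have toD : ∀ x, ‖x‖ = 1 → ‖T x‖ = N → ∃ y ∈ D, κ y = κ x := by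
    intro x hx hx'
    have : x ∈ {x : X | ‖x‖ = 1 ∧ ‖T x‖ = ‖T‖} := ⟨hx, by rw [hx', hTN]⟩
    rw [hD] at this
    rcases this with h | h
    · exact ⟨x, h, rfl⟩
    · exact ⟨-x, h, κneg x⟩
  have hp := Real.pi_pos
  obtain ⟨xa, ha1, ha2, ha3⟩ := hpt a ha
  obtain ⟨xb, hb1, hb2, hb3⟩ := hpt b hb
  have hpa := inv_pos.mpr (hn.pos _ (exp_ne_zero (a * I)))
  have hpb := inv_pos.mpr (hn.pos _ (exp_ne_zero (b * I)))
  have ka : κ xa < 0 := by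
    simp only [κ]
    rw [fval s0 a xa ha1, fval m a xa ha1]
    apply mul_neg_of_pos_of_neg
    · exact mul_pos hpa (Real.sin_pos_of_pos_of_lt_pi (by linarith) (by linarith))
    · exact mul_neg_of_pos_of_neg hpa
        (Real.sin_neg_of_neg_of_neg_pi_lt (by linarith) (by linarith))
  have kb : 0 < κ xb := by
    simp only [κ]
    rw [fval s0 b xb hb1, fval m b xb hb1]
    apply mul_pos
    · exact mul_pos hpb (Real.sin_pos_of_pos_of_lt_pi (by linarith) (by linarith))
    · exact mul_pos hpb (Real.sin_pos_of_pos_of_lt_pi (by linarith) (by linarith))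
  obtain ⟨ya, hya, hya'⟩ := toD xa ha2 ha3
  obtain ⟨yb, hyb, hyb'⟩ := toD xb hb2 hb3
  obtain ⟨y, hy, hy0⟩ := hDc.isPreconnected.intermediate_value hya hyb κc.continuousOn
    (show (0:ℝ) ∈ Set.Icc (κ ya) (κ yb) from ⟨by linarith, by linarith⟩)
  exact κD y hy hy0

open ComplexConjugate in
theorem finish_aux (n1 n2 : ℂ → ℝ) (hn1 : NormLike n1) (hn2 : NormLike n2)
    (tri : ∀ x y, n2 (x + y) ≤ n2 x + n2 y)
    (l1 : ∀ z, n1 z ≤ ‖z‖) (l2 : ∀ z, n2 z ≤ ‖z‖)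
    (m1 : ∀ u v : ℂ, (∀ z, n1 (u * z + v * conj z) ≤ ‖z‖) → ‖u‖ ^ 2 - ‖v‖ ^ 2 ≤ 1)
    (m2 : ∀ u v : ℂ, (∀ z, n2 (u * z + v * conj z) ≤ ‖z‖) → ‖u‖ ^ 2 - ‖v‖ ^ 2 ≤ 1)
    (a p : ℂ) (ha : ‖a‖ = 1) (hp : ‖p‖ < 1) (c : ℝ) (hc : 0 < c)
    (heq : ∀ z, n2 (a * (z + p * conj z)) = c * n1 z) (z : ℂ) : n2 (a * z) = n1 z := by
  have hq : 0 < 1 - ‖p‖ ^ 2 := by nlinarith [norm_nonneg p]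
  have hcc : (c : ℂ) ≠ 0 := by exact_mod_cast hc.ne'
  have key : ∀ z, n2 (a / c * z + a * p / c * conj z) = n1 z := by
    intro z
    rw [show a / c * z + a * p / c * conj z = ((c⁻¹ : ℝ) : ℂ) * (a * (z + p * conj z)) by
      push_cast; field_simp]
    rw [hn2.hom, heq, abs_of_pos (by positivity)]
    field_simp
  have e1 := m2 (a / c) (a * p / c) (fun z => by rw [key]; exact l1 z)
  have e2 := m1 ((c / (1 - ‖p‖ ^ 2) : ℝ)) (-((c / (1 - ‖p‖ ^ 2) : ℝ) * p)) (fun y => by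
    have := heq (((1 - ‖p‖ ^ 2)⁻¹ : ℝ) * (y - p * conj y))
    have hy : ((1 - ‖p‖ ^ 2)⁻¹ : ℝ) * (y - p * conj y) +
        p * conj (((1 - ‖p‖ ^ 2)⁻¹ : ℝ) * (y - p * conj y)) = y := by
      simp only [map_mul, map_sub, Complex.conj_ofReal, Complex.conj_conj]
      have hpp : p * conj p = ((‖p‖ ^ 2 : ℝ) : ℂ) := by
        rw [Complex.mul_conj, Complex.normSq_eq_norm_sq]
      have hi : (((1 - ‖p‖ ^ 2)⁻¹ : ℝ) : ℂ) * (1 - ((‖p‖ ^ 2 : ℝ) : ℂ)) = 1 := by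
        rw [← Complex.ofReal_one, ← Complex.ofReal_sub, ← Complex.ofReal_mul,
          inv_mul_cancel₀ hq.ne']
      linear_combination y * hi - (((1 - ‖p‖ ^ 2)⁻¹ : ℝ) : ℂ) * y * hpp
    rw [hy] at this
    rw [show ((c / (1 - ‖p‖ ^ 2) : ℝ) : ℂ) * y + -((c / (1 - ‖p‖ ^ 2) : ℝ) * p) * conj y =
      (c : ℝ) * (((1 - ‖p‖ ^ 2)⁻¹ : ℝ) * (y - p * conj y)) by
        rw [div_eq_mul_inv, Complex.ofReal_mul]; ring]
    rw [hn1.hom, abs_of_pos hc, ← this]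
    refine (l2 _).trans ?_
    rw [norm_mul, ha, one_mul])
  have e3 := m2 ((a + a / c) / 2) (a * p / c / 2) (fun z => by
    have t := tri (((1 / 2 : ℝ) : ℂ) * (a * z))
      (((1 / 2 : ℝ) : ℂ) * (a / c * z + a * p / c * conj z))
    rw [hn2.hom, hn2.hom, key, abs_of_pos (by norm_num)] at t
    have t1 := l1 z
    have t2 := l2 (a * z)
    rw [norm_mul, ha, one_mul] at t2
    rw [show (a + a / c) / 2 * z + a * p / c / 2 * conj z = ((1 / 2 : ℝ) : ℂ) * (a * z) +
      ((1 / 2 : ℝ) : ℂ) * (a / c * z + a * p / c * conj z) by push_cast; ring]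
    linarith)
  have na : ‖(a + a / c) / 2‖ = (c + 1) / (2 * c) := by
    rw [show (a + a / c) / 2 = a * (((c + 1) / (2 * c) : ℝ) : ℂ) by push_cast; field_simp]
    rw [norm_mul, ha, one_mul, Complex.norm_real, Real.norm_eq_abs, abs_of_pos (by positivity)]
  have nc : ‖(c : ℂ)‖ = c := by rw [Complex.norm_real, Real.norm_eq_abs, abs_of_pos hc]
  have nq : ‖((c / (1 - ‖p‖ ^ 2) : ℝ) : ℂ)‖ = c / (1 - ‖p‖ ^ 2) := by
    rw [Complex.norm_real, Real.norm_eq_abs, abs_of_pos (by positivity)]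
  rw [na] at e3
  rw [norm_neg, norm_mul, nq] at e2
  simp only [norm_div, norm_mul, ha, nc, one_mul, Complex.norm_ofNat] at e1 e2 e3
  set P := ‖p‖
  have f1 : 1 - P ^ 2 ≤ c ^ 2 := by
    rw [div_pow, div_pow, ← sub_div, div_le_one (by positivity)] at e1
    linarith
  have f2 : c ^ 2 ≤ 1 - P ^ 2 := by
    have : (c / (1 - P ^ 2)) ^ 2 - (c / (1 - P ^ 2) * P) ^ 2 = c ^ 2 / (1 - P ^ 2) := by
      field_simp
    rw [this, div_le_one hq] at e2
    exact e2
  have f3 : (c + 1) ^ 2 - P ^ 2 ≤ 4 * c ^ 2 := by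
    have : ((c + 1) / (2 * c)) ^ 2 - (P / c / 2) ^ 2 = ((c + 1) ^ 2 - P ^ 2) / (4 * c ^ 2) := by
      field_simp; ring
    rw [this, div_le_one (by positivity)] at e3
    exact e3
  have f4 : 1 ≤ c := by nlinarith
  have hP : P = 0 := by nlinarith [sq_nonneg P]
  have hc1 : c = 1 := by rw [hP] at f2; nlinarith
  have hp0 : p = 0 := norm_eq_zero.mp hP
  have := heq z
  rw [hp0, hc1] at this
  simpa using this

open ComplexConjugate in
theorem max_aux (n : ℂ → ℝ) (hn : NormLike n) : ∃ u v : ℂ, ‖v‖ < ‖u‖ ∧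
    (∀ z, n (u * z + v * conj z) ≤ ‖z‖) ∧
    ∀ u' v' : ℂ, (∀ z, n (u' * z + v' * conj z) ≤ ‖z‖) →
      ‖u'‖ ^ 2 - ‖v'‖ ^ 2 ≤ ‖u‖ ^ 2 - ‖v‖ ^ 2 := by
  have hsc : IsCompact (Metric.sphere (0:ℂ) 1) := isCompact_sphere 0 1
  have hsne : (Metric.sphere (0:ℂ) 1).Nonempty := ⟨1, by simp⟩
  obtain ⟨z1, hz1, hmin⟩ := hsc.exists_isMinOn hsne hn.cont.continuousOn
  obtain ⟨z2, hz2, hmax⟩ := hsc.exists_isMaxOn hsne hn.cont.continuousOn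
  have hz1' : ‖z1‖ = 1 := by simpa using hz1
  have hz2' : ‖z2‖ = 1 := by simpa using hz2
  have hd : 0 < n z1 := hn.pos _ (by rintro rfl; simp at hz1')
  have hC : 0 < n z2 := hn.pos _ (by rintro rfl; simp at hz2')
  set d := n z1
  set C := n z2
  have bounds : ∀ z, d * ‖z‖ ≤ n z ∧ n z ≤ C * ‖z‖ := by
    intro z
    by_cases hz : z = 0
    · subst hz; simp [hn.zero]
    have hzp : 0 < ‖z‖ := norm_pos_iff.mpr hz
    have hzz : z = (‖z‖ : ℝ) * (((‖z‖⁻¹ : ℝ) : ℂ) * z) := by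
      have : (‖z‖ : ℂ) ≠ 0 := by exact_mod_cast hzp.ne'
      push_cast; field_simp
    have hm : (((‖z‖⁻¹ : ℝ) : ℂ) * z) ∈ Metric.sphere (0:ℂ) 1 := by
      simp [hz]
    have e : n z = ‖z‖ * n (((‖z‖⁻¹ : ℝ) : ℂ) * z) := by
      conv_lhs => rw [hzz]
      rw [hn.hom, abs_of_pos hzp]
    have h1 : d ≤ _ := hmin hm
    have h2 : _ ≤ C := hmax hm
    constructor <;> rw [e] <;> nlinarith
  let K : Set (ℂ × ℂ) := {q | ∀ z, n (q.1 * z + q.2 * conj z) ≤ ‖z‖}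
  have Kcl : IsClosed K := by
    simp only [K, Set.ofPred_forall]
    apply isClosed_iInter
    intro z
    exact isClosed_le (hn.cont.comp (by fun_prop)) continuous_const
  have Kb : K ⊆ Metric.closedBall 0 (1 / d) := by
    intro q hq
    have hb : ∀ z, ‖z‖ = 1 → ‖q.1 * z + q.2 * conj z‖ ≤ 1 / d := by
      intro z hz
      rw [le_div_iff₀ hd]
      have := (bounds (q.1 * z + q.2 * conj z)).1
      have h2 := hq z
      rw [hz] at h2
      linarith
    have b1 := hb 1 (by simp)
    have b2 := hb Complex.I (by simp)
    simp only [map_one, mul_one, Complex.conj_I] at b1 b2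
    have b2' : ‖q.1 - q.2‖ ≤ 1 / d := by
      rw [show q.1 * Complex.I + q.2 * -Complex.I = (q.1 - q.2) * Complex.I by ring, norm_mul,
        Complex.norm_I, mul_one] at b2
      exact b2
    have c1 : ‖q.1‖ ≤ 1 / d := by
      have := norm_add_le (q.1 + q.2) (q.1 - q.2)
      rw [show q.1 + q.2 + (q.1 - q.2) = 2 * q.1 by ring, norm_mul, Complex.norm_ofNat] at this
      linarith
    have c2 : ‖q.2‖ ≤ 1 / d := by
      have := norm_sub_le (q.1 + q.2) (q.1 - q.2)
      rw [show q.1 + q.2 - (q.1 - q.2) = 2 * q.2 by ring, norm_mul, Complex.norm_ofNat] at this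
      linarith
    rw [mem_closedBall_zero_iff]
    exact max_le c1 c2
  have Kc : IsCompact K := (isCompact_closedBall _ _).of_isClosed_subset Kcl Kb
  have hmem : (((1 / C : ℝ) : ℂ), (0 : ℂ)) ∈ K := by
    intro z
    simp only [zero_mul, add_zero]
    rw [hn.hom, abs_of_pos (by positivity)]
    have := (bounds z).2
    rw [one_div, inv_mul_le_iff₀ hC]
    exact this
  obtain ⟨⟨u, v⟩, hq, hqm⟩ := Kc.exists_isMaxOn ⟨_, hmem⟩
    (f := fun q : ℂ × ℂ => ‖q.1‖ ^ 2 - ‖q.2‖ ^ 2) (by fun_prop)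
  refine ⟨u, v, ?_, hq, ?_⟩
  · have h1 := hqm hmem
    simp only [Set.mem_ofPred_eq, norm_zero, Complex.norm_real, Real.norm_eq_abs, sq_abs] at h1
    have : 0 < (1 / C) ^ 2 := by positivity
    apply lt_of_pow_lt_pow_left₀ 2 (norm_nonneg _)
    linarith
  · intro u' v' h'
    exact hqm (show (u', v') ∈ K from h')

open ComplexConjugate in
/-- The real-linear map `z ↦ u z + v z̄`. -/
noncomputable def lin (u v : ℂ) : ℂ →ₗ[ℝ] ℂ :=
  LinearMap.mulLeft ℝ u + (LinearMap.mulLeft ℝ v) ∘ₗ Complex.conjAe.toLinearMap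

open ComplexConjugate in
theorem lin_apply (u v z : ℂ) : lin u v z = u * z + v * conj z := by
  simp [lin]

theorem lin_inj (u v : ℂ) (h : ‖v‖ < ‖u‖) : Function.Injective (lin u v) := by
  rw [injective_iff_map_eq_zero]
  intro z hz
  rw [lin_apply, add_eq_zero_iff_eq_neg] at hz
  have := congrArg norm hz
  rw [norm_neg, norm_mul, norm_mul, RCLike.norm_conj] at this
  by_contra h0
  have := norm_pos_iff.mpr h0
  nlinarith

open Complex ComplexConjugate in
theorem core_aux {X : Type*} [NormedAddCommGroup X] [NormedSpace ℝ X] [FiniteDimensional ℝ X]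
    (h : ∀ T : X →L[ℝ] X, ∃ D : Set X, IsConnected D ∧ D ⊆ {x : X | ‖x‖ = 1} ∧
      {x : X | ‖x‖ = 1 ∧ ‖T x‖ = ‖T‖} = D ∪ (-D))
    (n : ℂ → ℝ) (hn : NormLike n) (A : X →ₗ[ℝ] ℂ) (hA : ∀ x, n (A x) ≤ ‖x‖)
    (hA' : ∀ z, ∃ x, A x = z ∧ ‖x‖ = n z) (B : ℂ →ₗ[ℝ] X) (hB : Function.Injective B) :
    ∃ p : ℂ, ‖p‖ < 1 ∧ ∃ c : ℝ, 0 < c ∧ ∀ z, ‖B (z + p * conj z)‖ = c * n z := by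
  have Bc : Continuous B := B.continuous_of_finiteDimensional
  let ρ : ℂ → ℂ := fun p => p / ((max 1 ‖p‖ : ℝ) : ℂ)
  have ρc : Continuous ρ := by
    apply Continuous.div continuous_id (by fun_prop)
    intro p
    have : (0:ℝ) < max 1 ‖p‖ := by positivity
    exact_mod_cast this.ne'
  have ρle : ∀ p, ‖ρ p‖ ≤ 1 := by
    intro p
    have : (0:ℝ) < max 1 ‖p‖ := by positivity
    simp only [ρ]
    rw [norm_div, norm_real, Real.norm_eq_abs, abs_of_pos this, div_le_one this]
    exact le_max_right _ _
  have ρe : ∀ φ : ℝ, ρ (exp (φ * I)) = exp (φ * I) := by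
    intro φ
    simp [ρ, norm_exp_ofReal_mul_I]
  let L : ℂ → ℂ →ₗ[ℝ] X := fun p => B ∘ₗ lin 1 (ρ p)
  have hL : ∀ p z, L p z = B (z + ρ p * conj z) := by
    intro p z; simp [L, lin_apply]
  have Lhom : ∀ p (c : ℝ) z, ‖L p (c * z)‖ = |c| * ‖L p z‖ := by
    intro p c z
    rw [← real_smul, map_smul, norm_smul, Real.norm_eq_abs]
  have npos : ∀ s : ℝ, 0 < n (exp (s * I)) := fun s => hn.pos _ (exp_ne_zero _)
  let r : ℂ → ℝ → ℝ := fun p s => ‖L p (exp (s * I))‖ / n (exp (s * I))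
  have rc : Continuous (fun q : ℂ × ℝ => r q.1 q.2) := by
    apply Continuous.div
    · simp only [hL]
      apply Continuous.norm
      apply Bc.comp
      fun_prop
    · exact hn.cont.comp (by fun_prop)
    · intro q; exact (npos q.2).ne'
  have expi : ∀ s : ℝ, exp (((s + Real.pi : ℝ) : ℂ) * I) = ((-1 : ℝ) : ℂ) * exp (s * I) := by
    intro s
    push_cast
    rw [add_mul, exp_add, exp_pi_mul_I]; ring
  have rper : ∀ p, Function.Periodic (r p) Real.pi := by
    intro p s
    simp only [r]
    rw [expi, Lhom, hn.hom]; simp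
  let N : ℂ → ℝ := fun p => sSup (r p '' Set.Icc 0 Real.pi)
  have Nc : Continuous N := isCompact_Icc.continuous_sSup rc
  have rcp : ∀ p, Continuous (r p) := fun p => rc.comp (f := fun s : ℝ => (p, s)) (by fun_prop)
  have hpi := Real.pi_pos
  have rle : ∀ p s, r p s ≤ N p := by
    intro p s
    obtain ⟨k, hk, -⟩ := existsUnique_add_zsmul_mem_Ico hpi s 0
    have e : r p s = r p (s + k • Real.pi) := by
      rw [(rper p).zsmul k s]
    rw [e]
    apply le_csSup (isCompact_Icc.bddAbove_image (rcp p).continuousOn)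
    exact ⟨_, ⟨hk.1, by linarith [hk.2]⟩, rfl⟩
  have rat : ∀ p, ∃ s, r p s = N p := by
    intro p
    obtain ⟨s, -, hs, -⟩ := isCompact_Icc.exists_sSup_image_eq_and_ge
      (Set.nonempty_Icc.mpr hpi.le) (rcp p).continuousOn
    exact ⟨s, hs.symm⟩
  have Npos : ∀ p, 0 < N p := by
    intro p
    by_contra hcon
    have hz : ∀ s : ℝ, exp (s * I) + ρ p * conj (exp (s * I)) = 0 := by
      intro s
      have h1 : r p s ≤ 0 := (rle p s).trans (not_lt.mp hcon)
      simp only [r] at h1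
      rw [div_le_iff₀ (npos s), zero_mul] at h1
      have := norm_le_zero_iff.mp h1
      rw [hL] at this
      exact (map_eq_zero_iff B hB).mp this
    have z1 := hz 0
    have z2 := hz (Real.pi / 2)
    simp only [ofReal_zero, zero_mul, exp_zero, map_one, mul_one] at z1
    push_cast at z2
    rw [exp_pi_div_two_mul_I, conj_I] at z2
    have : (2 : ℂ) * I = 0 := by linear_combination z2 + I * z1
    simp at this
  have wz : ∀ p s, N p - r p s = 0 ↔ ‖L p (exp (s * I))‖ = N p * n (exp (s * I)) := by
    intro p s
    simp only [r]
    rw [sub_eq_zero, eq_div_iff (npos s).ne']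
    exact eq_comm
  have ker : ∀ φ : ℝ, exp (((φ / 2 + Real.pi / 2 : ℝ) : ℂ) * I) +
      exp (φ * I) * conj (exp (((φ / 2 + Real.pi / 2 : ℝ) : ℂ) * I)) = 0 := by
    intro φ
    rw [← exp_conj, ← exp_add]
    simp only [map_mul, conj_ofReal, conj_I]
    have : exp ((φ : ℂ) * I + ((φ / 2 + Real.pi / 2 : ℝ) : ℂ) * -I)
      = exp (((φ / 2 + Real.pi / 2 : ℝ) : ℂ) * I - Real.pi * I) := by
      congr 1; push_cast; ring
    rw [this, exp_sub, exp_pi_mul_I]; ring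
  obtain ⟨p, hp⟩ := topo_aux (fun p s => N p - r p s)
    ((Nc.comp continuous_fst).sub rc) (fun p s => sub_nonneg.mpr (rle p s))
    (fun p s => by rw [rper p s])
    (fun p => by obtain ⟨s, hs⟩ := rat p; exact ⟨s, by rw [hs, sub_self]⟩)
    (by
      intro p s0 a m b h1 h2 h3 h4 h5 h6 h7
      rw [Ne, wz] at h5
      rw [wz] at h6 h7 ⊢
      refine ord_aux h n hn A hA hA' (L p) (N p) (Npos p) ?_ s0 a m b h1 h2 h3 h4 h5 h6 h7
      intro s
      have := rle p s
      simp only [r] at this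
      rwa [div_le_iff₀ (npos s)] at this)
    (by
      intro φ
      rw [Ne, wz, hL, ρe, ker, map_zero, norm_zero]
      exact (mul_pos (Npos _) (npos _)).ne)
  have heq : ∀ z, ‖B (z + ρ p * conj z)‖ = N p * n z := by
    intro z
    have := (wz p (arg z)).mp (hp _)
    rw [← hL, ← norm_mul_exp_arg_mul_I z, Lhom, hn.hom, this]
    ring
  refine ⟨ρ p, ?_, N p, Npos p, heq⟩
  refine lt_of_le_of_ne (ρle p) ?_
  intro h1
  have e : ρ p = exp (arg (ρ p) * I) := by
    have := norm_mul_exp_arg_mul_I (ρ p)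
    rw [h1] at this
    simpa using this.symm
  have := heq (exp (((arg (ρ p) / 2 + Real.pi / 2 : ℝ) : ℂ) * I))
  conv_lhs at this => rw [e]
  rw [← e] at this
  have k := ker (arg (ρ p))
  rw [← e] at k
  rw [k, map_zero, norm_zero] at this
  exact (mul_pos (Npos p) (npos _)).ne this

theorem quot_aux {X : Type*} [NormedAddCommGroup X] [NormedSpace ℝ X] [FiniteDimensional ℝ X]
    (A : X →ₗ[ℝ] ℂ) (hA : Function.Surjective A) :
    ∃ n : ℂ → ℝ, NormLike n ∧ (∀ x, n (A x) ≤ ‖x‖) ∧ ∀ z, ∃ x, A x = z ∧ ‖x‖ = n z := by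
  have Ac : Continuous A := A.continuous_of_finiteDimensional
  have : ProperSpace X := FiniteDimensional.proper ℝ X
  have fcl : ∀ z, IsClosed (A ⁻¹' {z}) := fun z => isClosed_singleton.preimage Ac
  have fne : ∀ z, (A ⁻¹' {z}).Nonempty := fun z => hA z
  let n : ℂ → ℝ := fun z => Metric.infDist 0 (A ⁻¹' {z})
  have nle : ∀ x, n (A x) ≤ ‖x‖ := by
    intro x
    have := Metric.infDist_le_dist_of_mem (x := (0 : X)) (show x ∈ A ⁻¹' {A x} from rfl)
    simpa using this
  have nat : ∀ z, ∃ x, A x = z ∧ ‖x‖ = n z := by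
    intro z
    obtain ⟨x, hx, hx'⟩ := (fcl z).exists_infDist_eq_dist (fne z) 0
    refine ⟨x, hx, ?_⟩
    simp only [n]
    rw [hx', dist_zero_left]
  have n0 : ∀ z, 0 ≤ n z := fun z => Metric.infDist_nonneg
  have hle : ∀ (c : ℝ) z, n (c * z) ≤ |c| * n z := by
    intro c z
    obtain ⟨x, hx, hx'⟩ := nat z
    have := nle (c • x)
    rw [map_smul, hx, norm_smul, hx', Real.norm_eq_abs] at this
    simpa using this
  have nadd : ∀ y z, n (y + z) ≤ n y + n z := by
    intro y z
    obtain ⟨x, hx, hx'⟩ := nat y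
    obtain ⟨x2, hx2, hx2'⟩ := nat z
    have := nle (x + x2)
    rw [map_add, hx, hx2] at this
    rw [← hx', ← hx2']
    exact this.trans (norm_add_le _ _)
  have nzero : n 0 = 0 := by
    have := nle 0
    simp at this
    exact le_antisymm this (n0 0)
  have nbd : ∀ z, n z ≤ (n 1 + n Complex.I) * ‖z‖ := by
    intro z
    have h1 := nadd ((z.re : ℂ) * 1) ((z.im : ℂ) * Complex.I)
    have h2 := hle z.re 1
    have h3 := hle z.im Complex.I
    rw [mul_one, Complex.re_add_im] at h1
    rw [mul_one] at h2
    have h4 := Complex.abs_re_le_norm z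
    have h5 := Complex.abs_im_le_norm z
    nlinarith [n0 1, n0 Complex.I]
  refine ⟨n, ⟨?_, ?_, ?_⟩, nle, nat⟩
  · have hl : LipschitzWith (Real.toNNReal (n 1 + n Complex.I)) n := by
      apply LipschitzWith.of_le_add_mul
      intro y z
      rw [Real.coe_toNNReal _ (add_nonneg (n0 _) (n0 _)), dist_eq_norm]
      have := nadd z (y - z)
      rw [add_sub_cancel] at this
      linarith [nbd (y - z)]
    exact hl.continuous
  · intro c z
    apply le_antisymm (hle c z)
    by_cases hc : c = 0
    · subst hc; simp [nzero]
    have := hle c⁻¹ (c * z)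
    rw [show ((c⁻¹ : ℝ) : ℂ) * (c * z) = z by
      have : (c : ℂ) ≠ 0 := by exact_mod_cast hc
      push_cast; field_simp] at this
    rw [abs_inv] at this
    have hcp := abs_pos.mpr hc
    rwa [le_inv_mul_iff₀ hcp] at this
  · intro z hz
    obtain ⟨x, hx, hx'⟩ := nat z
    rw [← hx']
    apply norm_pos_iff.mpr
    rintro rfl
    exact hz (by rw [← hx, map_zero])

theorem normLike_comp (n : ℂ → ℝ) (hn : NormLike n) (U : ℂ →ₗ[ℝ] ℂ) (hU : Function.Injective U) :
    NormLike (fun z => n (U z)) where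
  cont := hn.cont.comp U.continuous_of_finiteDimensional
  hom c z := by
    rw [← hn.hom, ← Complex.real_smul, map_smul, Complex.real_smul]
  pos z hz := hn.pos _ (fun h => hz ((map_eq_zero_iff U hU).mp h))

open ComplexConjugate in
theorem lin_comp_max (n : ℂ → ℝ) (u v : ℂ) (huv : ‖v‖ < ‖u‖)
    (hmax : ∀ u' v' : ℂ, (∀ z, n (u' * z + v' * conj z) ≤ ‖z‖) →
      ‖u'‖ ^ 2 - ‖v'‖ ^ 2 ≤ ‖u‖ ^ 2 - ‖v‖ ^ 2) (u' v' : ℂ)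
    (h : ∀ z, n (lin u v (u' * z + v' * conj z)) ≤ ‖z‖) : ‖u'‖ ^ 2 - ‖v'‖ ^ 2 ≤ 1 := by
  have := hmax (u * u' + v * conj v') (u * v' + v * conj u') (fun z => by
    have := h z
    rw [lin_apply] at this
    convert this using 2
    simp only [map_add, map_mul, Complex.conj_conj]
    ring)
  have e : ‖u * u' + v * conj v'‖ ^ 2 - ‖u * v' + v * conj u'‖ ^ 2 =
      (‖u‖ ^ 2 - ‖v‖ ^ 2) * (‖u'‖ ^ 2 - ‖v'‖ ^ 2) := by
    simp only [← Complex.normSq_eq_norm_sq, Complex.normSq_apply, Complex.add_re, Complex.add_im,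
      Complex.mul_re, Complex.mul_im, Complex.conj_re, Complex.conj_im]
    ring
  rw [e] at this
  have hp : 0 < ‖u‖ ^ 2 - ‖v‖ ^ 2 := by nlinarith [norm_nonneg v]
  nlinarith

theorem euclidean_of_symmetric_connected_norm_attainment
    {X : Type*} [NormedAddCommGroup X] [NormedSpace ℝ X] [FiniteDimensional ℝ X]
    (h : ∀ T : X →L[ℝ] X, ∃ D : Set X, IsConnected D ∧ D ⊆ {x : X | ‖x‖ = 1} ∧
      {x : X | ‖x‖ = 1 ∧ ‖T x‖ = ‖T‖} = D ∪ (-D)) :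
    Nonempty (InnerProductSpace ℝ X) := by
  refine ⟨InnerProductSpace.ofNorm ℝ ?_⟩
  intro x y
  let B0 : ℂ →ₗ[ℝ] X := Complex.reLm.smulRight x + Complex.imLm.smulRight y
  have hB0 : ∀ z, B0 z = z.re • x + z.im • y := fun z => rfl
  by_cases hinj : Function.Injective B0
  swap
  · rw [injective_iff_map_eq_zero] at hinj
    push Not at hinj
    obtain ⟨z, hz, hz0⟩ := hinj
    rw [hB0] at hz
    have hcol : ∃ (e : X) (s t : ℝ), x = s • e ∧ y = t • e := by
      by_cases hr : z.re = 0
      · have hi : z.im ≠ 0 := fun hi => hz0 (Complex.ext hr hi)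
        refine ⟨x, 1, 0, by simp, ?_⟩
        rw [hr, zero_smul, zero_add] at hz
        simpa [hi] using hz
      · refine ⟨y, -(z.im / z.re), 1, ?_, by simp⟩
        have : z.re • x = - (z.im • y) := eq_neg_of_add_eq_zero_left hz
        rw [neg_smul, div_eq_inv_mul, mul_smul, ← smul_neg, ← this, smul_smul,
          inv_mul_cancel₀ hr, one_smul]
    obtain ⟨e, s, t, rfl, rfl⟩ := hcol
    rw [← add_smul, ← sub_smul]
    simp only [norm_smul, Real.norm_eq_abs]
    have : ∀ c : ℝ, |c| * ‖e‖ * (|c| * ‖e‖) = c ^ 2 * ‖e‖ ^ 2 := by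
      intro c; rw [← sq_abs c]; ring
    simp only [this]; ring
  obtain ⟨A0, hA0⟩ := B0.exists_leftInverse_of_injective (LinearMap.ker_eq_bot.mpr hinj)
  have hsurj : Function.Surjective A0 := fun z => ⟨B0 z, by
    rw [← LinearMap.comp_apply, hA0, LinearMap.id_apply]⟩
  obtain ⟨n0, hn0, hle0, hat0⟩ := quot_aux A0 hsurj
  have hb0 : NormLike (fun z => ‖B0 z‖) := by
    refine ⟨B0.continuous_of_finiteDimensional.norm, ?_, ?_⟩
    · intro c z
      rw [← Complex.real_smul, map_smul, norm_smul, Real.norm_eq_abs]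
    · intro z hz
      exact norm_pos_iff.mpr (fun h => hz ((map_eq_zero_iff B0 hinj).mp h))
  obtain ⟨u1, v1, huv1, hl1, hm1⟩ := max_aux n0 hn0
  obtain ⟨u2, v2, huv2, hl2, hm2⟩ := max_aux _ hb0
  have inj1 := lin_inj u1 v1 huv1
  have inj2 := lin_inj u2 v2 huv2
  let U1 : ℂ ≃ₗ[ℝ] ℂ := LinearEquiv.ofInjectiveEndo (lin u1 v1) inj1
  have hU1 : ∀ z, U1 z = lin u1 v1 z := fun z => rfl
  have sur2 : Function.Surjective (lin u2 v2) := LinearMap.injective_iff_surjective.mp inj2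
  let n1 : ℂ → ℝ := fun z => n0 (lin u1 v1 z)
  have hn1 : NormLike n1 := normLike_comp n0 hn0 _ inj1
  let B : ℂ →ₗ[ℝ] X := B0 ∘ₗ lin u2 v2
  have hBn : NormLike (fun z => ‖B z‖) := normLike_comp _ hb0 _ inj2
  have hBinj : Function.Injective B := hinj.comp inj2
  let A : X →ₗ[ℝ] ℂ := U1.symm.toLinearMap ∘ₗ A0
  have hUA : ∀ x, lin u1 v1 (A x) = A0 x := by
    intro x
    rw [← hU1]
    simp [A]
  have hA : ∀ x, n1 (A x) ≤ ‖x‖ := by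
    intro x
    simp only [n1]
    rw [hUA]; exact hle0 x
  have hA' : ∀ z, ∃ x, A x = z ∧ ‖x‖ = n1 z := by
    intro z
    obtain ⟨x, hx, hx'⟩ := hat0 (lin u1 v1 z)
    refine ⟨x, inj1 ?_, hx'⟩
    rw [hUA, hx]
  have rot : ∀ a : ℂ, ‖a‖ = 1 → ∀ z, ‖B (a * z)‖ = n1 z := by
    intro a ha z
    have ha0 : a ≠ 0 := by rintro rfl; simp at ha
    obtain ⟨p, hp, c, hc, heq⟩ := core_aux h n1 hn1 A hA hA' (B ∘ₗ LinearMap.mulLeft ℝ a)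
      (hBinj.comp (mul_right_injective₀ ha0))
    refine finish_aux n1 (fun z => ‖B z‖) hn1 hBn ?_ ?_ ?_ ?_ ?_ a p ha hp c hc heq z
    · intro x y
      rw [map_add]; exact norm_add_le _ _
    · intro z
      simp only [n1, lin_apply]; exact hl1 z
    · intro z
      simp only [B, LinearMap.comp_apply, lin_apply]; exact hl2 z
    · exact lin_comp_max n0 u1 v1 huv1 hm1
    · exact lin_comp_max (fun z => ‖B0 z‖) u2 v2 huv2 hm2
  have hfin : ∀ z, ‖B z‖ = ‖z‖ * n1 1 := by
    intro z
    have e := rot (Complex.exp (z.arg * Complex.I)) (Complex.norm_exp_ofReal_mul_I _) 1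
    rw [mul_one] at e
    have := hBn.hom ‖z‖ (Complex.exp (z.arg * Complex.I))
    simp only [Complex.norm_mul_exp_arg_mul_I, abs_norm] at this
    rw [this, e]
  obtain ⟨z1, hz1⟩ := sur2 1
  obtain ⟨z2, hz2⟩ := sur2 Complex.I
  have ex : x = B z1 := by simp [B, hz1, hB0]
  have ey : y = B z2 := by simp [B, hz2, hB0]
  rw [ex, ey, ← map_add, ← map_sub]
  simp only [hfin]
  have := parallelogram_law_with_norm ℝ z1 z2
  linear_combination (n1 1) ^ 2 * this
end

section
/- Let H₁, H₂ be real Hilbert spaces, Z a finite-dimensional subspace of the space of compact linear operators from H₁ to H₂, and T a compact operator not in Z. Then there exists A₀ ∈ Z such that dist(T, Z) = sup{ ⟨Tx, y⟩ : ‖x‖ = 1, ‖y‖ = 1, ⟨A₀x, y⟩ = 0 }, and A₀ is a best approximation to T in Z. -/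
open RealInnerProductSpace

open Filter Topology in
lemma bj_one_side
    {H₁ H₂ : Type*} [NormedAddCommGroup H₁] [InnerProductSpace ℝ H₁] [CompleteSpace H₁]
    [NormedAddCommGroup H₂] [InnerProductSpace ℝ H₂] [CompleteSpace H₂]
    (S A : H₁ →L[ℝ] H₂) (hS : IsCompactOperator S) (d : ℝ) (hd : 0 < d) (hSd : ‖S‖ = d)
    (h : ∀ t : ℝ, d ≤ ‖S + t • A‖) :
    ∃ x : H₁, ‖x‖ = 1 ∧ ‖S x‖ = d ∧ 0 ≤ ⟪S x, A x⟫ := by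
  have key : ∀ n : ℕ, ∃ x : H₁, ‖x‖ < 1 ∧
      d - (1 / ((n : ℝ) + 1)) ^ 2 < ‖(S + (1 / ((n : ℝ) + 1)) • A) x‖ := by
    intro n
    apply ContinuousLinearMap.exists_lt_apply_of_lt_opNorm
    have := h (1 / ((n : ℝ) + 1))
    have h2 : 0 < (1 / ((n : ℝ) + 1)) ^ 2 := by positivity
    linarith
  choose x hx1 hx2 using key
  have ht : Tendsto (fun n : ℕ => 1 / ((n : ℝ) + 1)) atTop (𝓝 0) :=
    tendsto_one_div_add_atTop_nhds_zero_nat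
  have hAx : ∀ n, ‖A (x n)‖ ≤ ‖A‖ := fun n => A.unit_le_opNorm _ (hx1 n).le
  have hSx : ∀ n, ‖S (x n)‖ ≤ d := fun n => hSd ▸ S.unit_le_opNorm _ (hx1 n).le
  -- lower bound for the norms
  have hlow : ∀ n : ℕ, d - (1 / ((n : ℝ) + 1)) ^ 2 - (1 / ((n : ℝ) + 1)) * ‖A‖ ≤ ‖S (x n)‖ := by
    intro n
    have h1 := hx2 n
    have hp : 0 < 1 / ((n : ℝ) + 1) := by positivity
    generalize 1 / ((n : ℝ) + 1) = t at *
    have h2 : ‖(S + t • A) (x n)‖ ≤ ‖S (x n)‖ + t * ‖A (x n)‖ := by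
      simp only [ContinuousLinearMap.add_apply, ContinuousLinearMap.smul_apply]
      refine (norm_add_le _ _).trans ?_
      rw [norm_smul, Real.norm_of_nonneg hp.le]
    have := mul_le_mul_of_nonneg_left (hAx n) hp.le
    linarith
  have hinner : ∀ n : ℕ, -((1 / ((n : ℝ) + 1)) * (‖A‖ ^ 2 + 2 * d)) ≤ 2 * ⟪S (x n), A (x n)⟫ := by
    intro n
    have h1 := hx2 n
    have hp : 0 < 1 / ((n : ℝ) + 1) := by positivity
    generalize 1 / ((n : ℝ) + 1) = t at *
    have h2 : ‖(S + t • A) (x n)‖ ^ 2 =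
        ‖S (x n)‖ ^ 2 + 2 * (t * ⟪S (x n), A (x n)⟫) + t ^ 2 * ‖A (x n)‖ ^ 2 := by
      simp only [ContinuousLinearMap.add_apply, ContinuousLinearMap.smul_apply]
      rw [norm_add_sq_real, norm_smul, inner_smul_right, mul_pow, Real.norm_of_nonneg hp.le]
    have h3 : d ^ 2 - 2 * d * t ^ 2 ≤ ‖(S + t • A) (x n)‖ ^ 2 := by
      rcases le_total 0 (d - t ^ 2) with h0 | h0
      · have := pow_le_pow_left₀ h0 h1.le 2
        nlinarith [sq_nonneg (t ^ 2)]
      · have := sq_nonneg ‖(S + t • A) (x n)‖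
        nlinarith
    have h4 : ‖S (x n)‖ ^ 2 ≤ d ^ 2 := pow_le_pow_left₀ (norm_nonneg _) (hSx n) 2
    have h5 : ‖A (x n)‖ ^ 2 ≤ ‖A‖ ^ 2 := pow_le_pow_left₀ (norm_nonneg _) (hAx n) 2
    have h6 : t ^ 2 * ‖A (x n)‖ ^ 2 ≤ t ^ 2 * ‖A‖ ^ 2 :=
      mul_le_mul_of_nonneg_left h5 (sq_nonneg _)
    have h7 : 0 ≤ t * (2 * ⟪S (x n), A (x n)⟫ + t * (‖A‖ ^ 2 + 2 * d)) := by nlinarith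
    have := nonneg_of_mul_nonneg_right h7 hp
    linarith
  have hnormlim : Tendsto (fun n => ‖S (x n)‖) atTop (𝓝 d) := by
    refine tendsto_of_tendsto_of_tendsto_of_le_of_le ?_ tendsto_const_nhds hlow hSx
    simpa using ((tendsto_const_nhds (x := d)).sub (ht.pow 2)).sub (ht.mul_const ‖A‖)
  obtain ⟨K, hK, hKs⟩ := hS.image_closedBall_subset_compact (f := (S : H₁ →ₗ[ℝ] H₂)) 1
  have hmem : ∀ n, S (x n) ∈ K := fun n =>
    hKs ⟨x n, by simpa using (hx1 n).le, rfl⟩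
  obtain ⟨y, -, φ, hφ, hlim⟩ := hK.tendsto_subseq hmem
  have hnφ := hnormlim.comp hφ.tendsto_atTop
  have htφ := ht.comp hφ.tendsto_atTop
  -- strong convergence
  let S' := ContinuousLinearMap.adjoint S
  have hS' : ‖S'‖ = d := by
    rw [← hSd]; exact LinearIsometryEquiv.norm_map _ _
  have hdiff : Tendsto (fun n => d ^ 2 • x (φ n) - S' (S (x (φ n)))) atTop (𝓝 0) := by
    have hb : ∀ n, ‖d ^ 2 • x n - S' (S (x n))‖ ^ 2 ≤ d ^ 4 - d ^ 2 * ‖S (x n)‖ ^ 2 := by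
      intro n
      rw [norm_sub_sq_real, inner_smul_left, ContinuousLinearMap.adjoint_inner_right,
        real_inner_self_eq_norm_sq, norm_smul, mul_pow]
      have h1 : ‖x n‖ ^ 2 ≤ 1 := pow_le_one₀ (norm_nonneg _) (hx1 n).le
      have h2 : ‖S' (S (x n))‖ ≤ d * ‖S (x n)‖ := hS' ▸ S'.le_opNorm _
      have h3 := pow_le_pow_left₀ (norm_nonneg _) h2 2
      rw [Real.norm_of_nonneg (by positivity)]
      simp only [conj_trivial]
      nlinarith [mul_le_mul_of_nonneg_left h1 (by positivity : 0 ≤ (d ^ 2) ^ 2)]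
    have hz : Tendsto (fun n => d ^ 4 - d ^ 2 * ‖S (x (φ n))‖ ^ 2) atTop (𝓝 0) := by
      have := (tendsto_const_nhds (x := d ^ 4)).sub ((hnφ.pow 2).const_mul (d ^ 2))
      have e : d ^ 4 - d ^ 2 * d ^ 2 = 0 := by ring
      rw [e] at this
      exact this
    have hsq := squeeze_zero (fun n => sq_nonneg _) (fun n => hb (φ n)) hz
    have := hsq.sqrt
    simp only [Real.sqrt_zero, Real.sqrt_sq (norm_nonneg _)] at this
    exact tendsto_zero_iff_norm_tendsto_zero.2 this
  have hxlim : Tendsto (fun n => x (φ n)) atTop (𝓝 ((d ^ 2)⁻¹ • S' y)) := by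
    have h1 : Tendsto (fun n => S' (S (x (φ n)))) atTop (𝓝 (S' y)) :=
      (S'.continuous.tendsto y).comp hlim
    have h2 := (hdiff.add h1).const_smul ((d ^ 2)⁻¹)
    simp only [sub_add_cancel, zero_add] at h2
    refine h2.congr fun n => ?_
    rw [smul_smul, inv_mul_cancel₀ (by positivity), one_smul]
  generalize (d ^ 2)⁻¹ • S' y = z at hxlim
  have hSz : Tendsto (fun n => S (x (φ n))) atTop (𝓝 (S z)) := (S.continuous.tendsto z).comp hxlim
  have hAz : Tendsto (fun n => A (x (φ n))) atTop (𝓝 (A z)) := (A.continuous.tendsto z).comp hxlim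
  have hSzd : ‖S z‖ = d := tendsto_nhds_unique hSz.norm hnφ
  have hz1 : ‖z‖ ≤ 1 := le_of_tendsto hxlim.norm (Eventually.of_forall fun n => (hx1 _).le)
  refine ⟨z, le_antisymm hz1 ?_, hSzd, ?_⟩
  · have := S.le_opNorm z
    rw [hSzd, hSd] at this
    nlinarith
  · have h1 : Tendsto (fun n => 2 * ⟪S (x (φ n)), A (x (φ n))⟫) atTop (𝓝 (2 * ⟪S z, A z⟫)) :=
      (hSz.inner hAz).const_mul 2
    have h2 := (htφ.mul_const (‖A‖ ^ 2 + 2 * d)).neg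
    have := le_of_tendsto_of_tendsto' h2 h1 (fun n => hinner (φ n))
    simp at this
    exact this

lemma bj_zero
    {H₁ H₂ : Type*} [NormedAddCommGroup H₁] [InnerProductSpace ℝ H₁] [CompleteSpace H₁]
    [NormedAddCommGroup H₂] [InnerProductSpace ℝ H₂] [CompleteSpace H₂]
    (S A : H₁ →L[ℝ] H₂) (hS : IsCompactOperator S) (d : ℝ) (hd : 0 < d) (hSd : ‖S‖ = d)
    (h : ∀ t : ℝ, d ≤ ‖S + t • A‖) :
    ∃ x : H₁, ‖x‖ = 1 ∧ ‖S x‖ = d ∧ ⟪S x, A x⟫ = 0 := by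
  obtain ⟨u, hu1, hu2, hu3⟩ := bj_one_side S A hS d hd hSd h
  obtain ⟨v, hv1, hv2, hv3⟩ := bj_one_side S (-A) hS d hd hSd (fun t => by
    simpa using h (-t))
  simp only [ContinuousLinearMap.neg_apply, inner_neg_right, Left.nonneg_neg_iff] at hv3
  let S' := ContinuousLinearMap.adjoint S
  have hS' : ‖S'‖ = d := by
    rw [← hSd]; exact LinearIsometryEquiv.norm_map _ _
  have heig : ∀ x : H₁, ‖x‖ = 1 → ‖S x‖ = d → S' (S x) = d ^ 2 • x := by
    intro x h1 h2
    have h3 : ‖d ^ 2 • x - S' (S x)‖ ^ 2 ≤ 0 := by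
      rw [norm_sub_sq_real, inner_smul_left, ContinuousLinearMap.adjoint_inner_right,
        real_inner_self_eq_norm_sq, norm_smul, mul_pow]
      have h2' : ‖S' (S x)‖ ≤ d * ‖S x‖ := hS' ▸ S'.le_opNorm _
      have h3 := pow_le_pow_left₀ (norm_nonneg _) h2' 2
      rw [Real.norm_of_nonneg (by positivity), h1, h2]
      simp only [conj_trivial]
      rw [h2] at h3
      nlinarith
    have h4 : ‖d ^ 2 • x - S' (S x)‖ = 0 := by
      have := sq_nonneg ‖d ^ 2 • x - S' (S x)‖
      exact pow_eq_zero_iff (two_ne_zero) |>.1 (le_antisymm h3 this)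
    exact (sub_eq_zero.1 (norm_eq_zero.1 h4)).symm
  have hnorm : ∀ z : H₁, S' (S z) = d ^ 2 • z → ‖S z‖ = d * ‖z‖ := by
    intro z hz
    have : ‖S z‖ ^ 2 = (d * ‖z‖) ^ 2 := by
      rw [← real_inner_self_eq_norm_sq, ← ContinuousLinearMap.adjoint_inner_right]
      change ⟪z, S' (S z)⟫ = _
      rw [hz, inner_smul_right, real_inner_self_eq_norm_sq]; ring
    exact (pow_left_inj₀ (norm_nonneg _) (by positivity) two_ne_zero).1 this
  let c : ℝ → H₁ := fun t => (1 - t) • u + t • v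
  have hc : Continuous c := by fun_prop
  have hq : Continuous fun t => ⟪S (c t), A (c t)⟫ :=
    (S.continuous.comp hc).inner (A.continuous.comp hc)
  obtain ⟨t, ht, ht0⟩ := intermediate_value_Icc' (zero_le_one (α := ℝ)) hq.continuousOn
    (show (0 : ℝ) ∈ Set.Icc _ _ by simpa [c] using ⟨hv3, hu3⟩)
  by_cases hz : c t = 0
  · have h1 : (1 - t) • u = -(t • v) := eq_neg_of_add_eq_zero_left hz
    have h2 : 1 - t = t := by
      have := congrArg norm h1
      rwa [norm_neg, norm_smul, norm_smul, hu1, hv1, mul_one, mul_one,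
        Real.norm_of_nonneg (by linarith [ht.2]), Real.norm_of_nonneg ht.1] at this
    have h3 : t ≠ 0 := by intro h0; rw [h0] at h2; norm_num at h2
    rw [h2, ← smul_neg] at h1
    have h4 : u = -v := smul_right_injective _ h3 h1
    refine ⟨u, hu1, hu2, le_antisymm ?_ hu3⟩
    rw [h4]; simpa using hv3
  · have hzn : ‖c t‖ ≠ 0 := norm_ne_zero_iff.2 hz
    have he : S' (S (c t)) = d ^ 2 • c t := by
      simp only [c, map_add, map_smul, heig u hu1 hu2, heig v hv1 hv2, smul_add]
      rw [smul_comm, smul_comm t]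
    refine ⟨‖c t‖⁻¹ • c t, ?_, ?_, ?_⟩
    · rw [norm_smul, norm_inv, norm_norm, inv_mul_cancel₀ hzn]
    · rw [map_smul, norm_smul, norm_inv, norm_norm, hnorm _ he]
      field_simp
    · simp only [map_smul, inner_smul_left, inner_smul_right]
      simp only at ht0
      rw [ht0]; simp

theorem best_approximation_in_finite_dim_subspace
    {H₁ H₂ : Type*} [NormedAddCommGroup H₁] [InnerProductSpace ℝ H₁] [CompleteSpace H₁]
    [NormedAddCommGroup H₂] [InnerProductSpace ℝ H₂] [CompleteSpace H₂]
    (Z : Submodule ℝ (H₁ →L[ℝ] H₂)) (hZfin : FiniteDimensional ℝ Z)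
    (hZcpt : ∀ B ∈ Z, IsCompactOperator B)
    (T : H₁ →L[ℝ] H₂) (hT : IsCompactOperator T) (hTZ : T ∉ Z) :
    ∃ A₀ ∈ Z,
      sInf {r : ℝ | ∃ B ∈ Z, r = ‖T - B‖} =
        sSup {r : ℝ | ∃ (x : H₁) (y : H₂),
          ‖x‖ = 1 ∧ ‖y‖ = 1 ∧ ⟪A₀ x, y⟫ = 0 ∧ r = ⟪T x, y⟫} ∧
      ‖T - A₀‖ = sInf {r : ℝ | ∃ B ∈ Z, r = ‖T - B‖} := by
  have : ProperSpace Z := FiniteDimensional.proper ℝ Z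
  obtain ⟨A, hA⟩ : ∃ A : Z, ∀ B : Z, ‖T - A‖ ≤ ‖T - B‖ := by
    have hcont : Continuous fun B : Z => ‖T - (B : H₁ →L[ℝ] H₂)‖ :=
      (continuous_const.sub continuous_subtype_val).norm
    apply hcont.exists_forall_le
    have h1 : Filter.Tendsto (fun B : Z => ‖B‖ - ‖T‖) (Filter.cocompact Z) Filter.atTop :=
      Filter.tendsto_atTop_add_const_right _ (-‖T‖) (tendsto_norm_cocompact_atTop (E := Z))
    refine Filter.tendsto_atTop_mono (fun B => ?_) h1
    rw [norm_sub_rev]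
    exact norm_sub_norm_le (B : H₁ →L[ℝ] H₂) T
  have hleast : IsLeast {r : ℝ | ∃ B ∈ Z, r = ‖T - B‖} ‖T - A‖ :=
    ⟨⟨A, A.2, rfl⟩, by rintro r ⟨B, hB, rfl⟩; exact hA ⟨B, hB⟩⟩
  have hd : 0 < ‖T - A‖ := by
    refine norm_pos_iff.2 (sub_ne_zero.2 ?_)
    intro h
    exact hTZ (h ▸ A.2)
  have hcpt : IsCompactOperator (T - (A : H₁ →L[ℝ] H₂)) := hT.sub (hZcpt _ A.2)
  obtain ⟨x, hx1, hx2, hx3⟩ := bj_zero (T - (A : H₁ →L[ℝ] H₂)) A hcpt _ hd rfl (by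
    intro t
    have := hA ((1 - t) • A)
    have e : T - (((1 - t) • A : Z) : H₁ →L[ℝ] H₂) = T - (A : H₁ →L[ℝ] H₂) + t • (A : H₁ →L[ℝ] H₂) := by
      rw [Submodule.coe_smul]; module
    rwa [e] at this)
  refine ⟨A, A.2, ?_, hleast.csInf_eq.symm⟩
  rw [hleast.csInf_eq]
  symm
  apply IsGreatest.csSup_eq
  set S := T - (A : H₁ →L[ℝ] H₂) with hS
  have hTS : ∀ x, T x = S x + (A : H₁ →L[ℝ] H₂) x := by intro x; simp [hS]
  constructor
  · refine ⟨x, ‖S‖⁻¹ • S x, hx1, ?_, ?_, ?_⟩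
    · rw [norm_smul, norm_inv, norm_norm, hx2, inv_mul_cancel₀ hd.ne']
    · rw [inner_smul_right, real_inner_comm, hx3, mul_zero]
    · rw [inner_smul_right, hTS, inner_add_left, real_inner_comm (S x) ((A : H₁ →L[ℝ] H₂) x), hx3,
        real_inner_self_eq_norm_sq, hx2]
      field_simp
      simp
  · rintro r ⟨x, y, h1, h2, h3, rfl⟩
    rw [hTS, inner_add_left, h3, add_zero]
    refine (real_inner_le_norm _ _).trans ?_
    rw [h2, mul_one]
    exact S.unit_le_opNorm _ h1.le
end
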